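/- arXiv:2005.01875 — 2 statements merged into one kernel-verified Lean document; each statement's English description precedes it below -/
import Mathlib

section
/- Let l ≥ 1. For every finite Souslin measurable colouring c of 𝓔_∞(ω·l) and every E ∈ 𝓔_∞(ω·l), there exists F ∈ 𝓔_∞(ω·l) with F ≤ E such that c is constant on 𝓔_∞(ω·l) ↾ F = {F' ∈ 𝓔_∞(ω·l) : F' ≤ F}. -/
open Set

namespace DualRamsey

/-- `F` is a coarsening of `E` (written `F ≤ E` in the paper): every class of `F`
is a union of classes of `E`. -/
def Coarsens {X : Type*} (F E : Setoid X) : Prop := ∀ a b, E.r a b → F.r a b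

/-- The set of equivalence classes of a setoid. -/
def classes {X : Type*} (E : Setoid X) : Set (Set X) := {C | ∃ x, C = {y | E.r x y}}

/-- The set of minimal representatives of the classes of an equivalence relation on ℕ. -/
def minReps (E : Setoid ℕ) : Set ℕ := {n | ∀ m, E.r n m → n ≤ m}

/-- `pRep E k` is `p_k(E)`, the k-th minimal representative in increasing order. -/
noncomputable def pRep (E : Setoid ℕ) (k : ℕ) : ℕ := Nat.nth (· ∈ minReps E) k

/-- `approx n E` is the n-th approximation `r_n(E)`: `E` restricted to `{0,…,p_n(E)-1}`,
identified with its graph. -/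
noncomputable def approx (n : ℕ) (E : Setoid ℕ) : Set (ℕ × ℕ) :=
  {q | q.1 < pRep E n ∧ q.2 < pRep E n ∧ E.r q.1 q.2}

/-- Basic set `[a, E]` relative to a space `S` of equivalence relations. -/
noncomputable def basicSet (S : Set (Setoid ℕ)) (a : Set (ℕ × ℕ)) (E : ↥S) : Set ↥S :=
  {F | Coarsens F.1 E.1 ∧ ∃ n, approx n F.1 = a}

/-- The Ellentuck topology on a space `S` of equivalence relations. -/
noncomputable def ellentuckTop (S : Set (Setoid ℕ)) : TopologicalSpace ↥S :=
  TopologicalSpace.generateFrom {U | ∃ a E, U = basicSet S a E}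

def IsRamsey (S : Set (Setoid ℕ)) (X : Set ↥S) : Prop :=
  ∀ (a : Set (ℕ × ℕ)) (B : ↥S), (basicSet S a B).Nonempty →
    ∃ A ∈ basicSet S a B, basicSet S a A ⊆ X ∨ basicSet S a A ∩ X = ∅

def IsRamseyNull (S : Set (Setoid ℕ)) (X : Set ↥S) : Prop :=
  ∀ (a : Set (ℕ × ℕ)) (B : ↥S), (basicSet S a B).Nonempty →
    ∃ A ∈ basicSet S a B, basicSet S a A ∩ X = ∅

/-- The property of Baire with respect to the Ellentuck topology. -/
noncomputable def HasBP (S : Set (Setoid ℕ)) (X : Set ↥S) : Prop :=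
  ∃ O M : Set ↥S, (ellentuckTop S).IsOpen O ∧ @IsMeagre _ (ellentuckTop S) M ∧
    X = (O \ M) ∪ (M \ O)

/-- The Souslin operation applied to a scheme indexed by finite sequences of naturals. -/
def souslinOp {X : Type*} (A : List ℕ → Set X) : Set X :=
  ⋃ x : ℕ → ℕ, ⋂ n : ℕ, A ((List.range n).map x)

/-- `Y` belongs to the smallest field of sets containing all `t`-open sets and
closed under the Souslin operation. -/
def SouslinMeasurable {X : Type*} (t : TopologicalSpace X) (Y : Set X) : Prop :=
  ∀ 𝒜 : Set (Set X),
    (∀ U, t.IsOpen U → U ∈ 𝒜) →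
    (∀ A ∈ 𝒜, Aᶜ ∈ 𝒜) →
    (∀ A ∈ 𝒜, ∀ B ∈ 𝒜, A ∪ B ∈ 𝒜) →
    (∀ f : List ℕ → Set X, (∀ s, f s ∈ 𝒜) → souslinOp f ∈ 𝒜) →
    Y ∈ 𝒜

/-- The graph of an equivalence relation as a boolean-valued function. -/
noncomputable def graphMap {X : Type*} (E : Setoid X) : X × X → Bool :=
  fun q => @decide (E.r q.1 q.2) (Classical.dec _)

/-- The metrizable topology on a space of equivalence relations, as a subspace of
`2^(X × X)` via graphs. -/
noncomputable def graphTop {X : Type*} (S : Set (Setoid X)) : TopologicalSpace ↥S :=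
  TopologicalSpace.induced (fun E => graphMap E.1) inferInstance



/-! Equivalence relations on `ω·l`, identified with `ℕ × Fin l` where `(n,i)`
corresponds to the ordinal `ω·i + n`. -/

/-- The ordinal order on `ω·l ≅ ℕ × Fin l`. -/
def ordLE {l : ℕ} (a b : ℕ × Fin l) : Prop := a.2 < b.2 ∨ (a.2 = b.2 ∧ a.1 ≤ b.1)

/-- The lexicographic order `⪯` on `ω·l ≅ ℕ × Fin l`. -/
def lexLE {l : ℕ} (a b : ℕ × Fin l) : Prop := a.1 < b.1 ∨ (a.1 = b.1 ∧ a.2 ≤ b.2)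

/-- The set `p(E)` of minimal (in the ordinal order) representatives of the classes. -/
def minRepsL {l : ℕ} (E : Setoid (ℕ × Fin l)) : Set (ℕ × Fin l) :=
  {a | ∀ b, E.r a b → ordLE a b}

/-- The set of `⪯`-minimal representatives of the classes. -/
def lexMinRepsL {l : ℕ} (E : Setoid (ℕ × Fin l)) : Set (ℕ × Fin l) :=
  {a | ∀ b, E.r a b → lexLE a b}

/-- The `n`-th element of `ω·l` in the `⪯`-order. -/
def decodeL (l : ℕ) (hl : 0 < l) (n : ℕ) : ℕ × Fin l := (n / l, ⟨n % l, Nat.mod_lt n hl⟩)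

/-- `p_k(E)`: the `k`-th element of `p(E)` in the `⪯`-increasing enumeration. -/
noncomputable def pRepL (l : ℕ) (hl : 0 < l) (E : Setoid (ℕ × Fin l)) (k : ℕ) :
    ℕ × Fin l :=
  decodeL l hl (Nat.nth (fun n => decodeL l hl n ∈ minRepsL E) k)

/-- `𝓔_∞(ω·l)`: equivalence relations on `ω·l` with infinitely many classes whose
`⪯`-increasing enumeration `(p_k)` of minimal representatives satisfies
`p_k ∈ ω × {k mod l}`, and whose `⪯`-minimal representatives coincide with the
(ordinal-)minimal representatives. -/
noncomputable def EInfL (l : ℕ) (hl : 0 < l) : Set (Setoid (ℕ × Fin l)) :=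
  {E | (classes E).Infinite ∧
    (∀ k : ℕ, (pRepL l hl E k).2 = ⟨k % l, Nat.mod_lt k hl⟩) ∧
    lexMinRepsL E = minRepsL E}

/-!
Enumerate `ω·l` in `⪯`-increasing order. Then `𝓔_∞(ω·l)` becomes the monoid of rigid surjections
of `ℕ` respecting residues modulo `l`, and the coarsenings of a surjection are its left multiples.
The pigeonhole principle for one more approximation codes these approximations, beyond the
given one, as words over an alphabet of blocks of length `l`; it is an instance of the infinite
Carlson–Simpson theorem, itself deduced from the Hales–Jewett theorem. Combinatorial forcing turns
the pigeonhole into the Ramsey property of open sets. Fusion shows that the completely Ramsey sets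
form a σ-algebra, and an envelope argument in the style of Szpilrajn–Marczewski that they are
closed under the Souslin operation. Finitely many completely Ramsey colour classes are then decided
one after the other.
-/

section RigidSurjections

/-- A rigid surjection of `ℕ` respecting residues modulo `l`. The field `firstOcc n`, the least
preimage of `n`, is determined by `toFun`; carrying it as data makes the first occurrences of
composites, limits and quotients explicit. -/
structure RigidSurjection (l : ℕ) where
  toFun : ℕ → ℕ
  firstOcc : ℕ → ℕ
  firstOcc_strictMono : StrictMono firstOcc
  toFun_firstOcc : ∀ n, toFun (firstOcc n) = n
  firstOcc_toFun_le : ∀ x, firstOcc (toFun x) ≤ x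
  firstOcc_mod : ∀ n, firstOcc n % l = n % l
  toFun_mod_le : ∀ x, toFun x % l ≤ x % l

namespace RigidSurjection

variable {l : ℕ}

theorem toFun_injective :
    Function.Injective (toFun : RigidSurjection l → ℕ → ℕ) := by
  rintro ⟨f, p, _, hp, hp', _, _⟩ ⟨_, q, _, hq, hq', _, _⟩ rfl
  obtain rfl : p = q := funext fun n =>
    le_antisymm ((congrArg p (hq n)).symm.trans_le (hp' (q n)))
      ((congrArg q (hp n)).symm.trans_le (hq' (p n)))
  rfl

instance : FunLike (RigidSurjection l) ℕ ℕ := ⟨toFun, toFun_injective⟩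

@[simp] theorem apply_firstOcc (f : RigidSurjection l) (n : ℕ) : f (f.firstOcc n) = n :=
  f.toFun_firstOcc n

theorem firstOcc_apply_le (f : RigidSurjection l) (x : ℕ) : f.firstOcc (f x) ≤ x :=
  f.firstOcc_toFun_le x

theorem apply_mod_le (f : RigidSurjection l) (x : ℕ) : f x % l ≤ x % l := f.toFun_mod_le x

instance : Monoid (RigidSurjection l) where
  mul f g :=
    { toFun := f ∘ g
      firstOcc := g.firstOcc ∘ f.firstOcc
      firstOcc_strictMono := g.firstOcc_strictMono.comp f.firstOcc_strictMono
      toFun_firstOcc := fun n => by simp only [Function.comp_apply, apply_firstOcc]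
      firstOcc_toFun_le := fun x =>
        (g.firstOcc_strictMono.monotone (f.firstOcc_apply_le _)).trans (g.firstOcc_apply_le x)
      firstOcc_mod := fun n => (g.firstOcc_mod _).trans (f.firstOcc_mod n)
      toFun_mod_le := fun x => (f.apply_mod_le _).trans (g.apply_mod_le x) }
  one :=
    { toFun := id
      firstOcc := id
      firstOcc_strictMono := strictMono_id
      toFun_firstOcc := fun _ => rfl
      firstOcc_toFun_le := fun _ => le_rfl
      firstOcc_mod := fun _ => rfl
      toFun_mod_le := fun _ => le_rfl }
  mul_assoc _ _ _ := rfl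
  one_mul _ := rfl
  mul_one _ := rfl

@[simp] theorem mul_apply (f g : RigidSurjection l) (x : ℕ) : (f * g) x = f (g x) := rfl

@[simp] theorem firstOcc_mul (f g : RigidSurjection l) (n : ℕ) :
    (f * g).firstOcc n = g.firstOcc (f.firstOcc n) := rfl

theorem le_firstOcc (f : RigidSurjection l) (n : ℕ) : n ≤ f.firstOcc n :=
  f.firstOcc_strictMono.le_apply

theorem apply_le (f : RigidSurjection l) (x : ℕ) : f x ≤ x :=
  (f.le_firstOcc _).trans (f.firstOcc_apply_le x)

theorem firstOcc_le {f : RigidSurjection l} {n x : ℕ} (h : f x = n) : f.firstOcc n ≤ x :=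
  h ▸ f.firstOcc_apply_le x

theorem apply_lt_of_lt_firstOcc {f : RigidSurjection l} {n x : ℕ} (h : x < f.firstOcc n) :
    f x < n :=
  f.firstOcc_strictMono.lt_iff_lt.1 ((f.firstOcc_apply_le x).trans_lt h)

theorem apply_le_of_le_firstOcc {f : RigidSurjection l} {n x : ℕ} (h : x ≤ f.firstOcc n) :
    f x ≤ n :=
  f.firstOcc_strictMono.le_iff_le.1 ((f.firstOcc_apply_le x).trans h)

/-- The submonoid of rigid surjections fixing `0, …, k` pointwise. -/
def fixing (k : ℕ) : Submonoid (RigidSurjection l) where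
  carrier := {h | ∀ x ≤ k, h x = x}
  one_mem' _ _ := rfl
  mul_mem' hf hg x hx := by rw [mul_apply, hg x hx, hf x hx]

theorem fixing_antitone : Antitone (fixing : ℕ → Submonoid (RigidSurjection l)) :=
  fun _ _ hk _ hh x hx => hh x (hx.trans hk)

theorem firstOcc_of_mem_fixing {h : RigidSurjection l} {k : ℕ} (hh : h ∈ fixing k) {n : ℕ}
    (hn : n ≤ k) : h.firstOcc n = n :=
  le_antisymm (firstOcc_le (hh n hn)) (h.le_firstOcc n)

/-- `f` and `g` have the same `n`-th approximation: they agree up to the first occurrence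
of `n`. -/
def SameApprox (n : ℕ) (f g : RigidSurjection l) : Prop := ∀ x ≤ f.firstOcc n, f x = g x

namespace SameApprox

variable {n : ℕ} {f g : RigidSurjection l}

theorem refl (n : ℕ) (f : RigidSurjection l) : SameApprox n f f := fun _ _ => rfl

theorem firstOcc_eq (h : SameApprox n f g) : f.firstOcc n = g.firstOcc n := by
  have hle : g.firstOcc n ≤ f.firstOcc n :=
    firstOcc_le ((h _ le_rfl).symm.trans (f.apply_firstOcc n))
  exact le_antisymm (firstOcc_le ((h _ hle).trans (g.apply_firstOcc n))) hle

theorem symm (h : SameApprox n f g) : SameApprox n g f :=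
  fun x hx => (h x (hx.trans h.firstOcc_eq.ge)).symm

theorem trans {e : RigidSurjection l} (h : SameApprox n f g) (h' : SameApprox n g e) :
    SameApprox n f e :=
  fun x hx => (h x hx).trans (h' x (hx.trans h.firstOcc_eq.le))

theorem mono {m : ℕ} (h : SameApprox n f g) (hm : m ≤ n) : SameApprox m f g :=
  fun x hx => h x (hx.trans (f.firstOcc_strictMono.monotone hm))

theorem mul_right (h : SameApprox n f g) (c : RigidSurjection l) :
    SameApprox n (f * c) (g * c) :=
  fun x hx => h (c x) (apply_le_of_le_firstOcc hx)

theorem mul_fixing (h : SameApprox n f g) {u : RigidSurjection l}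
    (hu : u ∈ fixing (f.firstOcc n)) : SameApprox n f (g * u) :=
  fun x hx => by rw [mul_apply, hu x hx, h x hx]

end SameApprox

theorem exists_eq_mul {f g : RigidSurjection l} (h : ∀ x y, g x = g y → f x = f y) :
    ∃ u, f = u * g := by
  have hf : ∀ x, f (g.firstOcc (g x)) = f x := fun x => h _ _ (g.apply_firstOcc _)
  have hfirst : ∀ n, g.firstOcc (g (f.firstOcc n)) = f.firstOcc n := fun n =>
    le_antisymm (g.firstOcc_apply_le _) (firstOcc_le ((hf _).trans (f.apply_firstOcc n)))
  let u : RigidSurjection l :=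
    { toFun := fun v => f (g.firstOcc v)
      firstOcc := fun n => g (f.firstOcc n)
      firstOcc_strictMono := fun m n hmn =>
        apply_lt_of_lt_firstOcc ((f.firstOcc_strictMono hmn).trans_eq (hfirst n).symm)
      toFun_firstOcc := fun n => (hf _).trans (f.apply_firstOcc n)
      firstOcc_toFun_le := fun v => apply_le_of_le_firstOcc (f.firstOcc_apply_le _)
      firstOcc_mod := fun n => by rw [← g.firstOcc_mod, hfirst, f.firstOcc_mod]
      toFun_mod_le := fun v => (f.apply_mod_le _).trans_eq (g.firstOcc_mod v) }
  exact ⟨u, DFunLike.ext _ _ fun x => (hf x).symm⟩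

/-- The refinement of `f` that fixes `0, …, f.firstOcc k` pointwise and keeps every later value
of `f`, shifted so as to follow `f.firstOcc k` immediately. -/
def refineAt (f : RigidSurjection l) (k : ℕ) : RigidSurjection l :=
  let p := f.firstOcc k
  have hmod (i : ℕ) : (p + i) % l = (k + i) % l := Nat.ModEq.add_right i (f.firstOcc_mod k)
  have hle {j : ℕ} (hj : j ≤ k) : f.firstOcc j ≤ p := f.firstOcc_strictMono.monotone hj
  have hlt {j : ℕ} (hj : k < j) : p < f.firstOcc j := f.firstOcc_strictMono hj
  { toFun := fun x =>
      if f x ≤ k then if x ≤ p then x else f.firstOcc (f x) else p + (f x - k)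
    firstOcc := fun v => if v ≤ p then v else f.firstOcc (k + (v - p))
    firstOcc_strictMono := fun v w hvw => by
      dsimp only
      split_ifs with hv hw
      · exact hvw
      · exact hv.trans_lt (hlt (by omega))
      · omega
      · exact f.firstOcc_strictMono (by omega)
    toFun_firstOcc := fun v => by
      by_cases hv : v ≤ p
      · simp only [hv, if_true, apply_le_of_le_firstOcc (f := f) hv]
      · simp only [hv, if_false, apply_firstOcc, show ¬ k + (v - p) ≤ k by omega]
        omega
    firstOcc_toFun_le := fun x => by
      split_ifs with hk hx hx' hx'
      · exact le_rfl
      · exact f.firstOcc_apply_le x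
      · exact absurd (hle hk) hx'
      · omega
      · rw [show k + (p + (f x - k) - p) = f x by omega]
        exact f.firstOcc_apply_le x
    firstOcc_mod := fun v => by
      split_ifs with hv
      · rfl
      · rw [f.firstOcc_mod, ← hmod, show p + (v - p) = v by omega]
    toFun_mod_le := fun x => by
      split_ifs with hk hx
      · exact le_rfl
      · exact (f.firstOcc_mod _).trans_le (f.apply_mod_le x)
      · rw [hmod, show k + (f x - k) = f x by omega]
        exact f.apply_mod_le x }

theorem refineAt_apply (f : RigidSurjection l) (k x : ℕ) :
    f.refineAt k x = if f x ≤ k then if x ≤ f.firstOcc k then x else f.firstOcc (f x)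
      else f.firstOcc k + (f x - k) := rfl

theorem refineAt_mem_fixing (f : RigidSurjection l) (k : ℕ) :
    f.refineAt k ∈ fixing (f.firstOcc k) := fun x hx => by
  rw [refineAt_apply, if_pos (apply_le_of_le_firstOcc hx), if_pos hx]

theorem refineAt_apply_of_lt {f : RigidSurjection l} {k x : ℕ} (h : k < f x) :
    f.refineAt k x = f.firstOcc k + (f x - k) := by
  rw [refineAt_apply, if_neg h.not_ge]

theorem refineAt_apply_le {f : RigidSurjection l} {k x : ℕ} (h : f x ≤ k) :
    f.refineAt k x ≤ f.firstOcc k := by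
  rw [refineAt_apply, if_pos h]
  split_ifs with hx
  · exact hx
  · exact f.firstOcc_strictMono.monotone h

theorem apply_refineAt {f : RigidSurjection l} {k x : ℕ} (h : f x ≤ k) :
    f (f.refineAt k x) = f x := by
  rw [refineAt_apply, if_pos h]
  split_ifs
  · rfl
  · exact f.apply_firstOcc _

theorem exists_mul_refineAt_eq {n : ℕ} {a f g : RigidSurjection l}
    (h : SameApprox n (a * f) g) :
    ∃ u, SameApprox n a u ∧ g * f.refineAt (a.firstOcc n) = u * f := by
  set k := a.firstOcc n
  have hlow : ∀ x, f x ≤ k → g (f.refineAt k x) = a (f x) := fun x hx => by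
    rw [← h (f.refineAt k x) (refineAt_apply_le hx), mul_apply, apply_refineAt hx]
  obtain ⟨u, hu⟩ : ∃ u, g * f.refineAt k = u * f := exists_eq_mul fun x y hxy => by
    rcases le_or_gt (f x) k with hx | hx
    · rw [mul_apply, mul_apply, hlow x hx, hlow y (hxy ▸ hx), hxy]
    · rw [mul_apply, mul_apply, refineAt_apply_of_lt hx, refineAt_apply_of_lt (hxy ▸ hx), hxy]
  refine ⟨u, fun v hv => ?_, hu⟩
  have := DFunLike.congr_fun hu (f.firstOcc v)
  rw [mul_apply, mul_apply, apply_firstOcc, hlow _ ((f.apply_firstOcc v).trans_le hv),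
    apply_firstOcc] at this
  exact this

end RigidSurjection

end RigidSurjections

section Fusion

theorem exists_mem_forall_of_finite {M ι : Type*} [Monoid M] [Finite ι] {S : Submonoid M}
    {P : ι → M → Prop} (hdense : ∀ i x, ∃ h ∈ S, P i (h * x))
    (hstable : ∀ i x, ∀ h ∈ S, P i x → P i (h * x)) (x : M) :
    ∃ h ∈ S, ∀ i, P i (h * x) := by
  cases nonempty_fintype ι
  suffices H : ∀ s : Finset ι, ∃ h ∈ S, ∀ i ∈ s, P i (h * x) by
    simpa only [Finset.mem_univ, true_imp_iff] using H Finset.univ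
  intro s
  induction s using Finset.cons_induction with
  | empty => exact ⟨1, S.one_mem, fun i hi => absurd hi (Finset.notMem_empty i)⟩
  | cons i s _ ih =>
    obtain ⟨h, hh, hs⟩ := ih
    obtain ⟨g, hg, hi⟩ := hdense i (h * x)
    refine ⟨g * h, S.mul_mem hg hh, fun j hj => ?_⟩
    rw [mul_assoc]
    rcases Finset.mem_cons.1 hj with rfl | hj
    exacts [hi, hstable j _ g hg (hs j hj)]

open RigidSurjection

variable {l : ℕ}

namespace RigidSurjection

theorem exists_fusion_limit {k : ℕ} {e : ℕ → RigidSurjection l}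
    (he : ∀ n, ∃ g ∈ fixing (k + n), e (n + 1) = g * e n) :
    ∃ f, ∀ n, ∃ t ∈ fixing (k + n), f = t * e n := by
  have hstep : ∀ {n m}, n ≤ m → ∃ g ∈ fixing (k + n), e m = g * e n := fun {n m} hnm => by
    induction m, hnm using Nat.le_induction with
    | base => exact ⟨1, one_mem _, rfl⟩
    | succ m hnm ih =>
      obtain ⟨g, hg, hm⟩ := ih
      obtain ⟨g', hg', hm'⟩ := he m
      exact ⟨g' * g, mul_mem (fixing_antitone (by omega) hg') hg, by rw [hm', hm, mul_assoc]⟩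
  have happ : ∀ {n m x}, n ≤ m → e n x ≤ k + n → e m x = e n x := fun hnm hx => by
    obtain ⟨g, hg, hm⟩ := hstep hnm
    rw [hm, mul_apply, hg _ hx]
  have hfirst : ∀ {v m}, v ≤ m → (e m).firstOcc v = (e v).firstOcc v := fun hvm => by
    obtain ⟨g, hg, hm⟩ := hstep hvm
    rw [hm, firstOcc_mul, firstOcc_of_mem_fixing hg (Nat.le_add_left _ _)]
  have hdiag : ∀ {x m}, x ≤ m → e m x = e x x := fun hxm =>
    happ hxm (((e _).apply_le _).trans (Nat.le_add_left _ _))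
  let f : RigidSurjection l :=
    { toFun := fun x => e x x
      firstOcc := fun v => (e v).firstOcc v
      firstOcc_strictMono := fun v w hvw =>
        (hfirst hvw.le).symm.trans_lt ((e w).firstOcc_strictMono hvw)
      toFun_firstOcc := fun v => by
        rw [happ ((e v).le_firstOcc v), apply_firstOcc]
        exact ((e v).apply_firstOcc v).trans_le (Nat.le_add_left _ _)
      firstOcc_toFun_le := fun x =>
        (hfirst ((e x).apply_le x)).symm.trans_le ((e x).firstOcc_apply_le x)
      firstOcc_mod := fun v => (e v).firstOcc_mod v
      toFun_mod_le := fun x => (e x).apply_mod_le x }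
  refine ⟨f, fun n => ?_⟩
  obtain ⟨t, ht⟩ : ∃ t, f = t * e n := exists_eq_mul fun x y hxy => by
    obtain ⟨g, -, hg⟩ := hstep (le_max_right (max x y) n)
    have hmax : ∀ z ≤ max x y, e z z = g (e n z) := fun z hz => by
      rw [← hdiag (le_max_of_le_left (c := n) hz), hg, mul_apply]
    change e x x = e y y
    rw [hmax x (le_max_left x y), hmax y (le_max_right x y), hxy]
  refine ⟨t, fun v hv => ?_, ht⟩
  have hp : e n ((e n).firstOcc v) = v := (e n).apply_firstOcc v
  calc t v = f ((e n).firstOcc v) := by rw [ht, mul_apply, hp]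
    _ = e (max n ((e n).firstOcc v)) ((e n).firstOcc v) := (hdiag (le_max_right _ _)).symm
    _ = v := (happ (le_max_left _ _) (hp.trans_le hv)).trans hp

end RigidSurjection

/-- A family of properties `D n a` of rigid surjections that can be met by a fusion argument:
`D n a` depends only on the `n`-th approximation of `a`, and the `E` satisfying it are dense and
open for composition with surjections fixing the domain of that approximation. -/
structure IsDenseOpen (D : ℕ → RigidSurjection l → RigidSurjection l → Prop) : Prop where
  congr : ∀ {n a b E}, SameApprox n a b → D n a E → D n b E
  mul : ∀ {n a E h}, h ∈ fixing (a.firstOcc n) → D n a E → D n a (h * E)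
  exists_mul : ∀ n a E, ∃ h ∈ fixing (a.firstOcc n), D n a (h * E)

namespace IsDenseOpen

variable {ι : Type*} [Encodable ι] {D : ι → ℕ → RigidSurjection l → RigidSurjection l → Prop}

theorem exists_forall_firstOcc_eq (hD : ∀ j, IsDenseOpen (D j)) (k : ℕ)
    (E : RigidSurjection l) :
    ∃ h ∈ fixing k, ∀ j n a, a.firstOcc n = k → Encodable.encode j ≤ k → D j n a (h * E) := by
  have : Finite {j : ι // Encodable.encode j ≤ k} :=
    Finite.of_injective (fun j => (⟨Encodable.encode j.1, j.2⟩ : Iic k)) fun _ _ hij =>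
      Subtype.ext (Encodable.encode_injective (congrArg Subtype.val hij))
  let P : {j : ι // Encodable.encode j ≤ k} × (Iic k → Iic k) → RigidSurjection l → Prop :=
    fun q E => ∀ n (a : RigidSurjection l), a.firstOcc n = k → (∀ x : Iic k, a x = q.2 x) →
      D q.1 n a E
  have hdense : ∀ q E, ∃ h ∈ fixing k, P q (h * E) := fun q E => by
    by_cases hq : ∃ n, ∃ a : RigidSurjection l, a.firstOcc n = k ∧ ∀ x : Iic k, a x = q.2 x
    · obtain ⟨n, a, rfl, ha⟩ := hq
      obtain ⟨h, hh, hD'⟩ := (hD q.1).exists_mul n a E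
      refine ⟨h, hh, fun n' b hb hb' => ?_⟩
      have hab : ∀ x ≤ a.firstOcc n, a x = b x := fun x hx =>
        (ha ⟨x, hx⟩).trans (hb' ⟨x, hx⟩).symm
      obtain rfl : n = n' := by
        rw [← a.apply_firstOcc n, hab _ le_rfl, ← hb, b.apply_firstOcc]
      exact (hD q.1).congr hab hD'
    · exact ⟨1, one_mem _, fun n a ha ha' => absurd ⟨n, a, ha, ha'⟩ hq⟩
  obtain ⟨h, hh, hP⟩ := exists_mem_forall_of_finite hdense
    (fun q E h hh hE n a ha ha' => (hD q.1).mul (ha ▸ hh) (hE n a ha ha')) E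
  exact ⟨h, hh, fun j n a ha hj =>
    hP (⟨j, hj⟩, fun x => ⟨a x, (a.apply_le x).trans x.2⟩) n a ha fun _ => rfl⟩

theorem exists_diagonal (hD : ∀ j, IsDenseOpen (D j)) (k : ℕ) (E : RigidSurjection l) :
    ∃ h ∈ fixing k, ∀ j n a, k ≤ a.firstOcc n → Encodable.encode j ≤ a.firstOcc n →
      D j n a (h * E) := by
  choose h hh hD' using exists_forall_firstOcc_eq hD
  let e : ℕ → RigidSurjection l := Nat.rec E fun n E' => h (k + n) E' * E'
  obtain ⟨f, hf⟩ := exists_fusion_limit (k := k) (e := e) fun n => ⟨_, hh (k + n) (e n), rfl⟩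
  obtain ⟨t, ht, rfl⟩ := hf 0
  refine ⟨t, ht, fun j n a ha hj => ?_⟩
  obtain ⟨d, hd⟩ := Nat.exists_eq_add_of_le ha
  obtain ⟨s, hs, hfs⟩ := hf (d + 1)
  exact hfs ▸ (hD j).mul (fixing_antitone (by omega) hs) (hD' (k + d) (e d) j n a hd (hd ▸ hj))

end IsDenseOpen

end Fusion

section CarlsonSimpson

open Filter

variable {L : Type*}

/-- The combinatorial lines contained in a set `A` of words, as words over `L` and one variable
`none` that occurs. -/
def lineSet (A : Set (List L)) : Set (List (Option L)) :=
  {x | none ∈ x ∧ ∀ c, x.map (Option.getD · c) ∈ A}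

theorem lineSet_mono : Monotone (lineSet : Set (List L) → Set (List (Option L))) :=
  fun _ _ h _ hx => ⟨hx.1, fun c => h (hx.2 c)⟩

theorem exists_lineSet_nonempty_of_finite_cover [Finite L] {T : Set (Set (List L))}
    (hT : T.Finite) (hcover : ⋃₀ T = univ) : ∃ A ∈ T, (lineSet A).Nonempty := by
  have : Finite T := hT
  have hcol : ∀ y, ∃ A : T, y ∈ A.1 := fun y => by
    obtain ⟨A, hA, hy⟩ := mem_sUnion.1 (hcover ▸ mem_univ y)
    exact ⟨⟨A, hA⟩, hy⟩
  choose col hcol using hcol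
  obtain ⟨ι, _, hι⟩ := Combinatorics.Line.exists_mono_in_high_dimension L T
  let e := Fintype.equivFin ι
  obtain ⟨line, A, hA⟩ := hι fun v => col (List.ofFn (v ∘ e.symm))
  refine ⟨A, A.2, List.ofFn (line.idxFun ∘ e.symm), ?_, fun c => ?_⟩
  · obtain ⟨i, hi⟩ := line.proper
    exact List.mem_ofFn.2 ⟨e i, by rw [Function.comp_apply, e.symm_apply_apply, hi]⟩
  · rw [List.map_ofFn, ← hA c]
    exact hcol _

theorem exists_ultrafilter_lineSet_nonempty [Finite L] :
    ∃ w : Ultrafilter (List L), ∀ A ∈ w, (lineSet A).Nonempty := by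
  obtain ⟨w, hw⟩ := Ultrafilter.exists_ultrafilter_of_finite_inter_nonempty
    {A : Set (List L) | ¬ (lineSet Aᶜ).Nonempty} fun T hT => by
      by_contra hempty
      obtain ⟨_, ⟨A, hA, rfl⟩, hline⟩ := exists_lineSet_nonempty_of_finite_cover
        (T.finite_toSet.image compl) (by
          rw [← compl_sInter, not_nonempty_iff_eq_empty.1 hempty, compl_empty])
      exact hT hA hline
  refine ⟨w, fun A hA => by_contra fun hline => ?_⟩
  exact Ultrafilter.compl_mem_iff_notMem.1 (hw (by rwa [mem_ofPred_eq, compl_compl])) hA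

theorem exists_idempotent_ultrafilter_lineSet_nonempty [Finite L] :
    ∃ w : Ultrafilter (List L), (∀ A ∈ w, (lineSet A).Nonempty) ∧
      ∀ A ∈ w, ∀ᶠ x in w, ∀ᶠ y in w, x ++ y ∈ A := by
  let : Semigroup (List L) := { mul := (· ++ ·), mul_assoc := List.append_assoc }
  let : Semigroup (Ultrafilter (List L)) := Ultrafilter.semigroup
  have hmul (u v : Ultrafilter (List L)) (A : Set (List L)) :
      A ∈ u * v ↔ ∀ᶠ x in u, ∀ᶠ y in v, x ++ y ∈ A :=
    Ultrafilter.eventually_mul u v (· ∈ A)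
  have hclosed : IsClosed {w : Ultrafilter (List L) | ∀ A ∈ w, (lineSet A).Nonempty} := by
    simp only [ofPred_forall]
    refine isClosed_iInter fun A => isClosed_imp (ultrafilter_isOpen_basic A) isClosed_const
  obtain ⟨w, hw, hidem⟩ := exists_idempotent_in_compact_subsemigroup
    Ultrafilter.continuous_mul_left _ exists_ultrafilter_lineSet_nonempty hclosed.isCompact
    fun u _ v hv A hA => by
      obtain ⟨y, hy⟩ := ((hmul u v A).1 hA).exists
      obtain ⟨x, hx, hxA⟩ := hv _ hy
      refine ⟨y.map some ++ x, List.mem_append_right _ hx, fun c => ?_⟩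
      rw [List.map_append, List.map_map]
      exact (List.map_id' y).symm ▸ hxA c
  exact ⟨w, hw, fun A hA => (hmul w w A).1 (hidem.symm ▸ hA)⟩

theorem exists_extensible_subset {w : Ultrafilter (List L)}
    (hw : ∀ A ∈ w, ∀ᶠ x in w, ∀ᶠ y in w, x ++ y ∈ A) {A : Set (List L)} (hA : A ∈ w) :
    ∃ B ∈ w, B ⊆ A ∧ ∀ y ∈ B, ∀ᶠ x in w, y ++ x ∈ B := by
  refine ⟨{y | y ∈ A ∧ ∀ᶠ x in w, y ++ x ∈ A}, inter_mem hA (hw A hA), fun y hy => hy.1,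
    fun y hy => ?_⟩
  filter_upwards [hy.2, hw _ hy.2] with x hx hx'
  refine ⟨hx, ?_⟩
  filter_upwards [hx'] with z hz
  rwa [List.append_assoc]

/-- The longest prefix of a variable word in which the variable does not occur. -/
def constPrefix : List (Option L) → List L
  | some a :: x => a :: constPrefix x
  | _ => []

theorem exists_eq_constPrefix_append : ∀ {x : List (Option L)}, none ∈ x →
    ∃ t, x = (constPrefix x).map some ++ none :: t
  | none :: t, _ => ⟨t, rfl⟩
  | some a :: _, h =>
    have ⟨t, ht⟩ := exists_eq_constPrefix_append ((List.mem_cons.1 h).resolve_left nofun)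
    ⟨t, congrArg (some a :: ·) ht⟩

/-- Words over `L` in variables indexed by numbers below `k`, all of whose instances lie
in `B`. -/
def variableWords (B : Set (List L)) (k : ℕ) : Set (List (L ⊕ ℕ)) :=
  {Y | (∀ j, Sum.inr j ∈ Y → j < k) ∧ ∀ b : ℕ → L, Y.map (Sum.elim id b) ∈ B}

theorem map_inl_mem_variableWords {B : Set (List L)} {y : List L} (hy : y ∈ B) :
    y.map Sum.inl ∈ variableWords B 0 := by
  refine ⟨fun j hj => ?_, fun b => ?_⟩
  · obtain ⟨_, _, ⟨⟩⟩ := List.mem_map.1 hj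
  · rwa [List.map_map, Sum.elim_comp_inl, List.map_id]

theorem eventually_forall_append_mem [Finite L] {f : Filter (List L)}
    {B C : Set (List L)} (h : ∀ y ∈ B, ∀ᶠ x in f, y ++ x ∈ C) {k : ℕ} {Y : List (L ⊕ ℕ)}
    (hY : Y ∈ variableWords B k) :
    ∀ᶠ x in f, ∀ b : ℕ → L, Y.map (Sum.elim id b) ++ x ∈ C := by
  have hfin : (range fun b : ℕ → L => Y.map (Sum.elim id b)).Finite :=
    (List.finite_length_eq L Y.length).subset <| range_subset_iff.2 fun b => List.length_map _
  have hC : ∀ᶠ x in f, ∀ y ∈ range fun b : ℕ → L => Y.map (Sum.elim id b), y ++ x ∈ C :=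
    (eventually_all_finite hfin).2 (forall_mem_range.2 fun b => h _ (hY.2 b))
  filter_upwards [hC] with x hx b using hx _ (mem_range_self b)

theorem append_mem_variableWords {B : Set (List L)} {k : ℕ} {Y : List (L ⊕ ℕ)}
    (hY : Y ∈ variableWords B k) {x : List (Option L)}
    (hx : ∀ c, ∀ b : ℕ → L, Y.map (Sum.elim id b) ++ x.map (Option.getD · c) ∈ B) :
    Y ++ x.map (Option.elim · (Sum.inr k) Sum.inl) ∈ variableWords B (k + 1) := by
  refine ⟨fun j hj => ?_, fun b => ?_⟩
  · rcases List.mem_append.1 hj with hj | hj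
    · exact Nat.lt_succ_of_lt (hY.1 j hj)
    · obtain ⟨_ | a, -, ho⟩ := List.mem_map.1 hj
      · exact Nat.lt_succ_of_le (Sum.inr_injective ho).ge
      · cases ho
  · convert hx (b k) b using 1
    rw [List.map_append, List.map_map]
    refine congrArg (_ ++ ·) (List.map_congr_left fun o _ => ?_)
    cases o <;> rfl

theorem exists_variableWord_extension [Finite L] {w : Ultrafilter (List L)}
    {v : Filter (List (Option L))} [v.NeBot] (hv : ∀ A ∈ w, lineSet A ∈ v) {S B : Set (List L)}
    (hBS : ∀ y ∈ B, ∀ᶠ x in v, y ++ constPrefix x ∈ S)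
    (hB : ∀ y ∈ B, ∀ᶠ x in w, y ++ x ∈ B) {k : ℕ} {Y : List (L ⊕ ℕ)}
    (hY : Y ∈ variableWords B k) :
    ∃ (p : List L) (t : List (L ⊕ ℕ)), Y ++ p.map Sum.inl ∈ variableWords S k ∧
      Y ++ p.map Sum.inl ++ Sum.inr k :: t ∈ variableWords B (k + 1) := by
  have hS := tendsto_map.eventually (eventually_forall_append_mem
    (f := v.map constPrefix) (fun y hy => eventually_map.2 (hBS y hy)) hY)
  obtain ⟨x, hxS, hx, hxB⟩ :=
    (hS.and (hv _ (eventually_forall_append_mem hB hY))).exists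
  obtain ⟨t, ht⟩ := exists_eq_constPrefix_append hx
  refine ⟨constPrefix x, t.map (Option.elim · (Sum.inr k) Sum.inl),
    ⟨fun j hj => ?_, fun b => ?_⟩, ?_⟩
  · refine hY.1 j ((List.mem_append.1 hj).resolve_right fun hj => ?_)
    obtain ⟨_, _, ⟨⟩⟩ := List.mem_map.1 hj
  · rw [List.map_append, List.map_map, Sum.elim_comp_inl, List.map_id]
    exact hxS b
  · convert append_mem_variableWords hY hxB using 1
    conv_rhs => rw [ht]
    rw [List.map_append, List.map_map, List.append_assoc]
    rfl

/-- An infinite word over `L` with variables indexed by `ℕ`, each of which occurs and whose first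
occurrences `firstOcc 0 < firstOcc 1 < …` come in order. -/
structure InfiniteVariableWord (L : Type*) where
  letter : ℕ → L ⊕ ℕ
  firstOcc : ℕ → ℕ
  firstOcc_strictMono : StrictMono firstOcc
  letter_firstOcc : ∀ j, letter (firstOcc j) = Sum.inr j
  firstOcc_le : ∀ {x j}, letter x = Sum.inr j → firstOcc j ≤ x

/-- The word obtained by cutting `W` before the first occurrence of its `m`-th variable and
substituting `b j` for the `j`-th variable. -/
def InfiniteVariableWord.subst (W : InfiniteVariableWord L) (b : ℕ → L) (m : ℕ) : List L :=
  ((List.range (W.firstOcc m)).map W.letter).map (Sum.elim id b)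

theorem exists_limit_of_prefix {α : Type*} {Q : ℕ → List α} (hQ : ∀ k, Q k <+: Q (k + 1))
    (hlen : StrictMono fun k => (Q k).length) :
    ∃ W : ℕ → α, ∀ k, Q k = (List.range (Q k).length).map W := by
  have hmono : ∀ {j k}, j ≤ k → Q j <+: Q k := fun hjk =>
    Nat.le_induction List.prefix_rfl (fun k _ h => h.trans (hQ k)) _ hjk
  have hlt : ∀ x, x < (Q (x + 1)).length := fun x => hlen.le_apply (x := x + 1)
  refine ⟨fun x => (Q (x + 1))[x]'(hlt x), fun k => ?_⟩
  refine List.ext_getElem (by rw [List.length_map, List.length_range]) fun x hx _ => ?_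
  rw [List.getElem_map, List.getElem_range]
  rcases le_total k (x + 1) with h | h
  · exact (hmono h).getElem hx
  · exact ((hmono h).getElem (hlt x)).symm

theorem exists_infiniteVariableWord {S B : Set (List L)} (hB : B.Nonempty)
    (hstep : ∀ k, ∀ Y ∈ variableWords B k, ∃ (p : List L) (t : List (L ⊕ ℕ)),
      Y ++ p.map Sum.inl ∈ variableWords S k ∧
        Y ++ p.map Sum.inl ++ Sum.inr k :: t ∈ variableWords B (k + 1)) :
    ∃ W : InfiniteVariableWord L, ∀ b m, W.subst b m ∈ S := by
  choose p t hS ht using hstep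
  obtain ⟨y, hy⟩ := hB
  let Y : ∀ k, variableWords B k :=
    Nat.rec ⟨_, map_inl_mem_variableWords hy⟩ fun k Y => ⟨_, ht k Y.1 Y.2⟩
  let P : ℕ → List (L ⊕ ℕ) := fun k => (Y k).1 ++ (p k (Y k).1 (Y k).2).map Sum.inl
  have hP : ∀ k, P k ∈ variableWords S k := fun k => hS k (Y k).1 (Y k).2
  have hPP : ∀ k, P k ++ [Sum.inr k] <+: P (k + 1) := fun k =>
    List.IsPrefix.trans ⟨t k (Y k).1 (Y k).2, List.append_assoc ..⟩ (List.prefix_append _ _)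
  have hlen : StrictMono fun k => (P k).length := strictMono_nat_of_lt_succ fun k => by
    have h := (hPP k).length_le
    rw [List.length_append, List.length_singleton] at h
    exact h
  obtain ⟨W, hW⟩ := exists_limit_of_prefix (Q := fun k => P k ++ [Sum.inr k])
    (fun k => (hPP k).trans (List.prefix_append _ _)) (by
      simpa only [List.length_append, List.length_singleton] using hlen.add_const 1)
  have hPW : ∀ k, P k = (List.range (P k).length).map W ∧ Sum.inr k = W (P k).length := fun k => by
    have h := hW k
    rw [List.length_append, List.length_singleton, List.range_succ, List.map_append] at h
    obtain ⟨h1, h2⟩ := List.append_inj' h rfl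
    exact ⟨h1, List.singleton_injective h2⟩
  refine ⟨⟨W, fun k => (P k).length, hlen, fun k => (hPW k).2.symm, fun {x j} hx => ?_⟩,
    fun b m => ?_⟩
  · by_contra! hlt
    have hj : Sum.inr j ∈ P j := (hPW j).1 ▸ List.mem_map.2 ⟨x, List.mem_range.2 hlt, hx⟩
    exact lt_irrefl j ((hP j).1 j hj)
  · have h := (hP m).2 b
    rw [(hPW m).1] at h
    exact h

theorem carlson_simpson [Finite L] (S : Set (List L)) : ∃ W : InfiniteVariableWord L,
    (∀ b m, W.subst b m ∈ S) ∨ ∀ b m, W.subst b m ∉ S := by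
  obtain ⟨w, hline, hidem⟩ := exists_idempotent_ultrafilter_lineSet_nonempty (L := L)
  have : ((w : Filter (List L)).lift' lineSet).NeBot := (lift'_neBot_iff lineSet_mono).2 hline
  let v := Ultrafilter.of ((w : Filter (List L)).lift' lineSet)
  have hv : ∀ A ∈ w, lineSet A ∈ v := fun A hA => Ultrafilter.of_le _ (mem_lift' hA)
  suffices H : ∀ S : Set (List L), (∀ᶠ y in w, ∀ᶠ x in v, y ++ constPrefix x ∈ S) →
      ∃ W : InfiniteVariableWord L, ∀ b m, W.subst b m ∈ S by
    rcases w.eventually_or.1 (.of_forall fun y =>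
      v.eventually_or.1 (.of_forall fun x => em (y ++ constPrefix x ∈ S))) with hS | hS
    · exact (H S hS).imp fun _ => Or.inl
    · exact (H Sᶜ hS).imp fun _ => Or.inr
  intro S hS
  obtain ⟨B, hBw, hBS, hB⟩ := exists_extensible_subset hidem hS
  exact exists_infiniteVariableWord (w.nonempty_of_mem hBw) fun k Y hY =>
    exists_variableWord_extension hv hBS hB hY

end CarlsonSimpson

section Pigeonhole

open RigidSurjection

variable {l : ℕ} [NeZero l]

theorem lexLE_iff {a b : ℕ × Fin l} :
    lexLE a b ↔ (Nat.divModEquiv l).symm a ≤ (Nat.divModEquiv l).symm b := by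
  obtain ⟨q, i⟩ := a
  obtain ⟨r, j⟩ := b
  simp only [lexLE, Nat.divModEquiv_symm_apply, Fin.le_def]
  rcases lt_trichotomy q r with h | rfl | h
  · have := Nat.mul_le_mul_right l (Nat.succ_le_of_lt h)
    rw [Nat.succ_mul] at this
    omega
  · omega
  · have := Nat.mul_le_mul_right l (Nat.succ_le_of_lt h)
    rw [Nat.succ_mul] at this
    omega

/-- The `i`-th argument of the `q`-th block, the blocks being the successive intervals of length
`l` after `0, …, k`. -/
def blockPos (k q : ℕ) (i : Fin l) : ℕ := k + 1 + (Nat.divModEquiv l).symm (q, i)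

section BlockPos

variable {k q r : ℕ} {i j : Fin l}

theorem lt_blockPos : k < blockPos k q i := Nat.le_add_right _ _

theorem blockPos_le_blockPos :
    blockPos k q i ≤ blockPos k r j ↔ q < r ∨ q = r ∧ i ≤ j := by
  rw [blockPos, blockPos, Nat.add_le_add_iff_left, ← lexLE_iff, lexLE]

theorem blockPos_lt_blockPos :
    blockPos k q i < blockPos k r j ↔ q < r ∨ q = r ∧ i < j := by
  rw [← not_le, blockPos_le_blockPos]
  omega

theorem blockPos_mod (k q : ℕ) (i : Fin l) : blockPos k q i % l = (k + 1 + i) % l := by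
  rw [blockPos, Nat.divModEquiv_symm_apply, add_comm (q * l), ← add_assoc,
    Nat.add_mul_mod_self_right]

theorem le_or_exists_eq_blockPos (l k x : ℕ) [NeZero l] :
    x ≤ k ∨ ∃ q, ∃ i : Fin l, x = blockPos k q i := by
  refine (le_or_gt x k).imp_right fun h => ?_
  refine ⟨(Nat.divModEquiv l (x - (k + 1))).1, (Nat.divModEquiv l (x - (k + 1))).2, ?_⟩
  rw [blockPos, Prod.mk.eta, Equiv.symm_apply_apply]
  omega

end BlockPos

/-- The letters of the Carlson–Simpson colouring: the tuples of values in `0, …, k` that a rigid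
surjection may take on a block. -/
def Block (l k : ℕ) : Type :=
  {b : Fin l → Fin (k + 1) // ∀ i, (b i : ℕ) % l ≤ (k + 1 + i) % l}

namespace Block

variable {k : ℕ}

instance : Finite (Block l k) :=
  inferInstanceAs (Finite {b : Fin l → Fin (k + 1) // ∀ i, (b i : ℕ) % l ≤ (k + 1 + i) % l})

instance : Inhabited (Block l k) :=
  ⟨⟨fun _ => 0, fun _ => (Nat.zero_mod l).trans_le (Nat.zero_le _)⟩⟩

/-- The function that is the identity on `0, …, k` and whose values on the `q`-th block are given
by the `q`-th letter of `W`, the `j`-th variable standing for the identity on the `j`-th block. -/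
def wordFun (W : ℕ → Block l k ⊕ ℕ) (x : ℕ) : ℕ :=
  if x ≤ k then x else
    (W (Nat.divModEquiv l (x - (k + 1))).1).elim
      (fun b => b.1 (Nat.divModEquiv l (x - (k + 1))).2)
      (fun j => blockPos k j (Nat.divModEquiv l (x - (k + 1))).2)

theorem wordFun_of_le (W : ℕ → Block l k ⊕ ℕ) {x : ℕ} (hx : x ≤ k) : wordFun W x = x :=
  if_pos hx

theorem wordFun_blockPos (W : ℕ → Block l k ⊕ ℕ) (q : ℕ) (i : Fin l) :
    wordFun W (blockPos k q i) = (W q).elim (fun b => b.1 i) (fun j => blockPos k j i) := by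
  rw [wordFun, if_neg lt_blockPos.not_ge, blockPos, Nat.add_sub_cancel_left,
    Equiv.apply_symm_apply]

variable {W : ℕ → Block l k ⊕ ℕ} {q : ℕ}

theorem wordFun_blockPos_of_eq_inl {b : Block l k} (h : W q = Sum.inl b) (i : Fin l) :
    wordFun W (blockPos k q i) = b.1 i := by
  rw [wordFun_blockPos, h, Sum.elim_inl]

theorem wordFun_blockPos_of_eq_inr {j : ℕ} (h : W q = Sum.inr j) (i : Fin l) :
    wordFun W (blockPos k q i) = blockPos k j i := by
  rw [wordFun_blockPos, h, Sum.elim_inr]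

theorem wordFun_inr_blockPos (p : ℕ → ℕ) (q : ℕ) (i : Fin l) :
    wordFun (fun j => (Sum.inr (p j) : Block l k ⊕ ℕ)) (blockPos k q i) = blockPos k (p q) i :=
  wordFun_blockPos _ q i

theorem wordFun_inr_strictMono {p : ℕ → ℕ} (hp : StrictMono p) :
    StrictMono (wordFun fun j => (Sum.inr (p j) : Block l k ⊕ ℕ)) := by
  intro v w hvw
  rcases le_or_exists_eq_blockPos l k v with hv | ⟨q, i, rfl⟩ <;>
    rcases le_or_exists_eq_blockPos l k w with hw | ⟨r, j, rfl⟩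
  · rwa [wordFun_of_le _ hv, wordFun_of_le _ hw]
  · rw [wordFun_of_le _ hv, wordFun_inr_blockPos]
    exact hv.trans_lt lt_blockPos
  · exact absurd (hvw.trans_le hw) lt_blockPos.not_gt
  · rw [wordFun_inr_blockPos, wordFun_inr_blockPos, blockPos_lt_blockPos]
    exact (blockPos_lt_blockPos.1 hvw).imp (fun h => hp h) (And.imp_left (congrArg p))

/-- The rigid surjection read off an infinite variable word in blocks. -/
def surjection (W : InfiniteVariableWord (Block l k)) : RigidSurjection l where
  toFun := wordFun W.letter
  firstOcc := wordFun fun j => Sum.inr (W.firstOcc j)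
  firstOcc_strictMono := wordFun_inr_strictMono W.firstOcc_strictMono
  toFun_firstOcc v := by
    rcases le_or_exists_eq_blockPos l k v with hv | ⟨q, i, rfl⟩
    · rw [wordFun_of_le (l := l) _ hv, wordFun_of_le _ hv]
    · rw [wordFun_inr_blockPos, wordFun_blockPos_of_eq_inr (W.letter_firstOcc q)]
  firstOcc_toFun_le x := by
    rcases le_or_exists_eq_blockPos l k x with hx | ⟨q, i, rfl⟩
    · rw [wordFun_of_le (l := l) _ hx, wordFun_of_le _ hx]
    · rcases hq : W.letter q with b | j
      · rw [wordFun_blockPos_of_eq_inl hq, wordFun_of_le _ (Fin.is_le _)]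
        exact (Fin.is_le _).trans lt_blockPos.le
      · rw [wordFun_blockPos_of_eq_inr hq, wordFun_inr_blockPos, blockPos_le_blockPos]
        exact (W.firstOcc_le hq).lt_or_eq.imp_right (⟨·, le_rfl⟩)
  firstOcc_mod v := by
    rcases le_or_exists_eq_blockPos l k v with hv | ⟨q, i, rfl⟩
    · rw [wordFun_of_le (l := l) _ hv]
    · rw [wordFun_inr_blockPos, blockPos_mod, blockPos_mod]
  toFun_mod_le x := by
    rcases le_or_exists_eq_blockPos l k x with hx | ⟨q, i, rfl⟩
    · rw [wordFun_of_le (l := l) _ hx]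
    · rcases hq : W.letter q with b | j
      · rw [wordFun_blockPos_of_eq_inl hq, blockPos_mod]
        exact b.2 i
      · rw [wordFun_blockPos_of_eq_inr hq, blockPos_mod, blockPos_mod]

theorem surjection_mem_fixing (W : InfiniteVariableWord (Block l k)) :
    surjection W ∈ fixing k := fun _ hx => wordFun_of_le _ hx

end Block

open Block

/-- `f` extends the `n`-th approximation of `a` by the values listed, block by block, in the word
`w`, and then takes the value `n + 1` for the first time. -/
structure Codes (a : RigidSurjection l) (n : ℕ) (w : List (Block l (a.firstOcc n)))
    (f : RigidSurjection l) : Prop where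
  sameApprox : SameApprox n a f
  apply_blockPos : ∀ q (i : Fin l), ∀ h : q < w.length,
    f (blockPos (a.firstOcc n) q i) = a (w[q].1 i)
  apply_blockPos_length : f (blockPos (a.firstOcc n) w.length (0 : Fin l)) = n + 1

variable {a f g : RigidSurjection l} {n : ℕ}

theorem Codes.sameApprox_succ {w : List (Block l (a.firstOcc n))} (hf : Codes a n w f)
    (hg : Codes a n w g) : SameApprox (n + 1) f g := fun x hx => by
  rcases le_or_exists_eq_blockPos l (a.firstOcc n) x with hxk | ⟨q, i, rfl⟩
  · exact (hf.sameApprox x hxk).symm.trans (hg.sameApprox x hxk)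
  · rcases blockPos_le_blockPos.1 (hx.trans (firstOcc_le hf.apply_blockPos_length)) with
      hq | ⟨rfl, hi⟩
    · rw [hf.apply_blockPos q i hq, hg.apply_blockPos q i hq]
    · obtain rfl := nonpos_iff_eq_zero.1 hi
      rw [hf.apply_blockPos_length, hg.apply_blockPos_length]

theorem exists_firstOcc_succ_eq_blockPos (f : RigidSurjection l) (n : ℕ) :
    ∃ m, f.firstOcc (n + 1) = blockPos (f.firstOcc n) m (0 : Fin l) := by
  have hmod : f.firstOcc n + 1 ≡ f.firstOcc (n + 1) [MOD l] :=
    (Nat.ModEq.add_right 1 (f.firstOcc_mod n)).trans (f.firstOcc_mod (n + 1)).symm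
  have hle : f.firstOcc n + 1 ≤ f.firstOcc (n + 1) := f.firstOcc_strictMono n.lt_succ_self
  obtain ⟨m, hm⟩ := (Nat.modEq_iff_dvd' hle).1 hmod
  refine ⟨m, ?_⟩
  rw [blockPos, Nat.divModEquiv_symm_apply, Fin.val_zero, Nat.add_zero, mul_comm, ← hm]
  omega

theorem exists_block_of_apply_lt {q : ℕ}
    (hq : ∀ i : Fin l, g (blockPos (a.firstOcc n) q i) < n + 1) :
    ∃ b : Block l (a.firstOcc n), ∀ i : Fin l, g (blockPos (a.firstOcc n) q i) = a (b.1 i) := by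
  refine ⟨⟨fun i => ⟨a.firstOcc (g (blockPos (a.firstOcc n) q i)), ?_⟩, fun i => ?_⟩, fun i => ?_⟩
  · exact Nat.lt_succ_of_le (a.firstOcc_strictMono.monotone (Nat.le_of_lt_succ (hq i)))
  · exact (a.firstOcc_mod _).trans_le ((g.apply_mod_le _).trans_eq (blockPos_mod _ q i))
  · exact (a.apply_firstOcc _).symm

theorem exists_codes_mul_surjection (h : SameApprox n a g)
    (W : InfiniteVariableWord (Block l (a.firstOcc n))) :
    ∃ b m, Codes a n (W.subst b m) (g * surjection W) := by
  obtain ⟨m, hm⟩ := exists_firstOcc_succ_eq_blockPos g n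
  rw [← h.firstOcc_eq] at hm
  have hb : ∀ j, ∃ b : Block l (a.firstOcc n), j < m →
      ∀ i : Fin l, g (blockPos (a.firstOcc n) j i) = a (b.1 i) := fun j => by
    by_cases hj : j < m
    · obtain ⟨b, hb⟩ := exists_block_of_apply_lt (q := j) fun i => apply_lt_of_lt_firstOcc
        (hm ▸ blockPos_lt_blockPos.2 (Or.inl hj))
      exact ⟨b, fun _ => hb⟩
    · exact ⟨default, fun hj' => absurd hj' hj⟩
  choose b hb using hb
  have hlen : (W.subst b m).length = W.firstOcc m := by
    rw [InfiniteVariableWord.subst, List.length_map, List.length_map, List.length_range]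
  refine ⟨b, m, h.mul_fixing (surjection_mem_fixing W), fun q i hq => ?_, ?_⟩
  · have hletter : (W.subst b m)[q] = (W.letter q).elim id b := by
      simp only [InfiniteVariableWord.subst, List.getElem_map, List.getElem_range]
    rw [hletter, mul_apply]
    change g (wordFun W.letter _) = _
    rcases hWq : W.letter q with c | j
    · rw [wordFun_blockPos_of_eq_inl hWq, Sum.elim_inl, id, h _ (Fin.is_le _)]
    · rw [wordFun_blockPos_of_eq_inr hWq, Sum.elim_inr]
      exact hb j (W.firstOcc_strictMono.lt_iff_lt.1 ((W.firstOcc_le hWq).trans_lt (hlen ▸ hq))) i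
  · rw [hlen, mul_apply]
    change g (wordFun W.letter _) = _
    rw [wordFun_blockPos_of_eq_inr (W.letter_firstOcc m), ← hm, apply_firstOcc]

theorem pigeonhole (n : ℕ) (a : RigidSurjection l) {S : Set (RigidSurjection l)}
    (hS : ∀ f g, SameApprox (n + 1) f g → f ∈ S → g ∈ S) :
    ∃ h ∈ fixing (a.firstOcc n),
      (∀ g, SameApprox n a g → g * h ∈ S) ∨ ∀ g, SameApprox n a g → g * h ∉ S := by
  obtain ⟨W, hW⟩ := carlson_simpson {w | ∃ f ∈ S, Codes a n w f}
  refine ⟨surjection W, surjection_mem_fixing W, hW.imp (fun hW g hg => ?_) fun hW g hg hgS => ?_⟩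
  · obtain ⟨b, m, hcodes⟩ := exists_codes_mul_surjection hg W
    obtain ⟨f, hf, hfcodes⟩ := hW b m
    exact hS f _ (hfcodes.sameApprox_succ hcodes) hf
  · obtain ⟨b, m, hcodes⟩ := exists_codes_mul_surjection hg W
    exact hW b m ⟨_, hgS, hcodes⟩

end Pigeonhole

section CompletelyRamsey

namespace RigidSurjection

variable {l n k : ℕ} {X : Set (RigidSurjection l)} {a b h B C : RigidSurjection l}

/-- `B` accepts the `n`-th approximation of `a`: `X` contains every `g * B` with `g` extending
that approximation. -/
def Accepts (X : Set (RigidSurjection l)) (n : ℕ) (a B : RigidSurjection l) : Prop :=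
  ∀ g, SameApprox n a g → g * B ∈ X

/-- `B` rejects the `n`-th approximation of `a`: no refinement of `B` that leaves this
approximation available accepts it. -/
def Rejects (X : Set (RigidSurjection l)) (n : ℕ) (a B : RigidSurjection l) : Prop :=
  ∀ h ∈ fixing (a.firstOcc n), ¬ Accepts X n a (h * B)

/-- All `g * B` with `g` extending the `n`-th approximation of `a` lie on the same side of `X`. -/
def Homogeneous (X : Set (RigidSurjection l)) (n : ℕ) (a B : RigidSurjection l) : Prop :=
  Accepts X n a B ∨ Accepts Xᶜ n a B

theorem Accepts.congr (hab : SameApprox n a b) (ha : Accepts X n a B) : Accepts X n b B :=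
  fun g hg => ha g (hab.trans hg)

theorem Accepts.mul (hh : h ∈ fixing (a.firstOcc n)) (ha : Accepts X n a B) :
    Accepts X n a (h * B) :=
  fun g hg => ha (g * h) (hg.mul_fixing hh)

theorem Accepts.mono {m : ℕ} (hnm : n ≤ m) (ha : Accepts X n a B) : Accepts X m a B :=
  fun g hg => ha g (hg.mono hnm)

theorem Accepts.superset {Y : Set (RigidSurjection l)} (hXY : X ⊆ Y) (ha : Accepts X n a B) :
    Accepts Y n a B :=
  fun g hg => hXY (ha g hg)

theorem Accepts.mul_mem (ha : Accepts X n a B) : a * B ∈ X := ha a (.refl n a)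

theorem Accepts.of_mul (ha : Accepts X n (a * C) B) : Accepts X n a (C * B) :=
  fun g hg => ha (g * C) (hg.mul_right C)

theorem Rejects.congr (hab : SameApprox n a b) (ha : Rejects X n a B) : Rejects X n b B :=
  fun h hh hb => ha h (hab.firstOcc_eq ▸ hh) (hb.congr hab.symm)

theorem Rejects.mul (hh : h ∈ fixing (a.firstOcc n)) (ha : Rejects X n a B) :
    Rejects X n a (h * B) :=
  fun g hg => ha (g * h) (mul_mem hg hh)

theorem Rejects.not_accepts (ha : Rejects X n a B) : ¬ Accepts X n a B := ha 1 (one_mem _)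

theorem Rejects.of_mul (ha : Rejects X n (a * C) B) : Rejects X n a (C * B) := fun h hh hacc => by
  have hsame : SameApprox n (a * C) (a * (h * C)) :=
    ((SameApprox.refl n a).mul_fixing hh).mul_right C
  refine ha ((h * C).refineAt (a.firstOcc n)) ?_ fun g hg => ?_
  · rw [hsame.firstOcc_eq, firstOcc_mul]
    exact refineAt_mem_fixing _ _
  · obtain ⟨u, hu, hgu⟩ := exists_mul_refineAt_eq (hsame.symm.trans hg)
    rw [← mul_assoc, hgu]
    exact hacc u hu

theorem isDenseOpen_accepts_or_rejects (X : Set (RigidSurjection l)) :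
    IsDenseOpen fun n a B => Accepts X n a B ∨ Rejects X n a B where
  congr hab := Or.imp (.congr hab) (.congr hab)
  mul hh := Or.imp (.mul hh) (.mul hh)
  exists_mul n a E := by
    by_cases hE : Rejects X n a E
    · exact ⟨1, one_mem _, Or.inr hE⟩
    · simp only [Rejects, not_forall, not_not] at hE
      obtain ⟨h, hh, hacc⟩ := hE
      exact ⟨h, hh, Or.inl hacc⟩

theorem isDenseOpen_rejects_succ [NeZero l]
    (hB : ∀ n a, k ≤ a.firstOcc n → Accepts X n a B ∨ Rejects X n a B) :
    IsDenseOpen fun n a C => k ≤ a.firstOcc n → Rejects X n (a * C) B →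
      ∀ g, SameApprox n a g → Rejects X (n + 1) (g * C) B where
  congr hab ha hk hrej g hg :=
    ha (hab.firstOcc_eq ▸ hk) (hrej.congr (hab.symm.mul_right _)) g (hab.trans hg)
  mul {n a C h} hh ha hk hrej g hg :=
    ha hk (hrej.congr (((SameApprox.refl n a).mul_fixing hh).symm.mul_right C)) _
      (hg.mul_fixing hh)
  exists_mul n a C := by
    by_cases hrej : k ≤ a.firstOcc n ∧ Rejects X n (a * C) B
    swap
    · exact ⟨1, one_mem _, fun hk hrej' => absurd ⟨hk, hrej'⟩ hrej⟩
    obtain ⟨h, hh, hall | hnone⟩ := pigeonhole n a (S := {u | Rejects X (n + 1) (u * C) B})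
      fun f g hfg hf => Rejects.congr (hfg.mul_right C) hf
    · exact ⟨h, hh, fun _ _ => hall⟩
    · refine absurd (fun g hg => ?_) (hrej.2.of_mul h hh)
      have hdepth : k ≤ (g * h * C).firstOcc (n + 1) :=
        calc k ≤ g.firstOcc n := hrej.1.trans_eq hg.firstOcc_eq
          _ ≤ (h * C).firstOcc (g.firstOcc n) := le_firstOcc _ _
          _ ≤ (g * h * C).firstOcc (n + 1) := (g * h * C).firstOcc_strictMono.monotone n.le_succ
      exact ((hB _ _ hdepth).resolve_right (hnone g hg)).mul_mem

theorem exists_accepts_or_forall_rejects [NeZero l] (X : Set (RigidSurjection l)) (n : ℕ)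
    (a E : RigidSurjection l) :
    ∃ h ∈ fixing (a.firstOcc n), Accepts X n a (h * E) ∨
      ∃ H ∈ fixing (a.firstOcc n), ∀ g, SameApprox n a g → ∀ m, n ≤ m →
        Rejects X m (g * H) (h * E) := by
  obtain ⟨h, hh, hdec⟩ := IsDenseOpen.exists_diagonal
    (fun _ : Unit => isDenseOpen_accepts_or_rejects X) (a.firstOcc n) E
  refine ⟨h, hh, ?_⟩
  replace hdec n' b hb := hdec () n' b hb (Nat.zero_le _)
  refine (hdec n a le_rfl).imp_right fun hrej => ?_
  obtain ⟨H, hH, hsucc⟩ := IsDenseOpen.exists_diagonal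
    (fun _ : Unit => isDenseOpen_rejects_succ hdec) (a.firstOcc n) 1
  refine ⟨H, hH, fun g hg m hm => ?_⟩
  induction m, hm using Nat.le_induction with
  | base => exact hrej.congr (hg.mul_fixing hH)
  | succ m hm ih =>
    have hdepth : a.firstOcc n ≤ g.firstOcc m :=
      hg.firstOcc_eq.trans_le (g.firstOcc_strictMono.monotone hm)
    exact hsucc () m g hdepth (Nat.zero_le _) hdepth ih g (.refl m g)

theorem exists_homogeneous_of_forall_accepts [NeZero l]
    (hX : ∀ g, g * B ∈ X → ∃ n, Accepts X n g B) (n : ℕ) (a : RigidSurjection l) :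
    ∃ h ∈ fixing (a.firstOcc n), Homogeneous X n a (h * B) := by
  obtain ⟨h, hh, hacc | ⟨H, hH, hrej⟩⟩ := exists_accepts_or_forall_rejects X n a B
  · exact ⟨h, hh, Or.inl hacc⟩
  · refine ⟨H * h, mul_mem hH hh, Or.inr fun g hg hmem => ?_⟩
    obtain ⟨m, hm⟩ := hX (g * (H * h)) hmem
    exact (hrej g hg (max m n) (le_max_right _ _)).not_accepts
      (Accepts.of_mul (hm.mono (le_max_left _ _)))

theorem Homogeneous.accepts_of_mul_mem (hB : Homogeneous X n a B) (ha : a * B ∈ X) :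
    Accepts X n a B :=
  hB.resolve_right fun hacc => hacc.mul_mem ha

/-- `X` is completely Ramsey: every `E` has a refinement, leaving the `n`-th approximation of `a`
available, that decides membership in `X` for all extensions of that approximation. -/
def CompletelyRamsey (X : Set (RigidSurjection l)) : Prop :=
  ∀ n a E, ∃ h ∈ fixing (a.firstOcc n), Homogeneous X n a (h * E)

namespace CompletelyRamsey

theorem isDenseOpen (hX : CompletelyRamsey X) : IsDenseOpen (Homogeneous X) where
  congr hab := Or.imp (.congr hab) (.congr hab)
  mul hh := Or.imp (.mul hh) (.mul hh)
  exists_mul := hX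

theorem compl (hX : CompletelyRamsey X) : CompletelyRamsey Xᶜ := fun n a E => by
  obtain ⟨h, hh, hhom⟩ := hX n a E
  refine ⟨h, hh, hhom.symm.imp_right fun hacc => ?_⟩
  rwa [compl_compl]

theorem iUnion [NeZero l] {ι : Type*} [Countable ι] {Y : ι → Set (RigidSurjection l)}
    (hY : ∀ j, CompletelyRamsey (Y j)) : CompletelyRamsey (⋃ j, Y j) := fun n a E => by
  have := Encodable.ofCountable ι
  obtain ⟨h, hh, hhom⟩ := IsDenseOpen.exists_diagonal (fun j => (hY j).isDenseOpen)
    (a.firstOcc n) E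
  obtain ⟨h', hh', hhom'⟩ := exists_homogeneous_of_forall_accepts (X := ⋃ j, Y j) (B := h * E)
    (fun g hg => by
      obtain ⟨j, hj⟩ := mem_iUnion.1 hg
      let m := max (a.firstOcc n) (Encodable.encode j)
      have hm : m ≤ g.firstOcc m := g.le_firstOcc m
      have hjm := hhom j m g ((le_max_left _ _).trans hm) ((le_max_right _ _).trans hm)
      exact ⟨m, (hjm.accepts_of_mul_mem hj).superset (subset_iUnion Y j)⟩) n a
  exact ⟨h' * h, mul_mem hh' hh, hhom'⟩

theorem union [NeZero l] {Y : Set (RigidSurjection l)} (hX : CompletelyRamsey X)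
    (hY : CompletelyRamsey Y) : CompletelyRamsey (X ∪ Y) := by
  rw [union_eq_iUnion]
  exact iUnion (Bool.forall_bool.2 ⟨hY, hX⟩)

theorem inter [NeZero l] {Y : Set (RigidSurjection l)} (hX : CompletelyRamsey X)
    (hY : CompletelyRamsey Y) : CompletelyRamsey (X ∩ Y) := by
  rw [← compl_compl (X ∩ Y), compl_inter]
  exact (hX.compl.union hY.compl).compl

theorem preimage_mul_right (hX : CompletelyRamsey X) (B : RigidSurjection l) :
    CompletelyRamsey ((· * B) ⁻¹' X) :=
  fun n a E => hX n a (E * B)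

end CompletelyRamsey

theorem exists_forall_mul_eq_of_completelyRamsey {κ : Type*} [Finite κ]
    {c : RigidSurjection l → κ} (hc : ∀ i, CompletelyRamsey (c ⁻¹' {i}))
    (E : RigidSurjection l) : ∃ h, ∀ u v, c (u * (h * E)) = c (v * (h * E)) := by
  obtain ⟨h, -, hhom⟩ := exists_mem_forall_of_finite
    (P := fun i B => Homogeneous (c ⁻¹' {i}) 0 1 B) (fun i B => hc i 0 1 B)
    (fun i _ _ hh => (hc i).isDenseOpen.mul hh) E
  have hsame (u : RigidSurjection l) : SameApprox 0 1 u := fun x hx =>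
    (Nat.le_zero.1 hx).symm ▸ (Nat.le_zero.1 (u.apply_le 0)).symm
  refine ⟨h, fun u v => ?_⟩
  rcases hhom (c (v * (h * E))) with hacc | hacc
  · exact hacc u (hsame u)
  · exact absurd rfl (hacc v (hsame v))

instance : TopologicalSpace (RigidSurjection l) := .induced (⇑) inferInstance

theorem continuous_apply (x : ℕ) : Continuous fun f : RigidSurjection l => f x :=
  (_root_.continuous_apply x).comp continuous_induced_dom

theorem isOpen_iff : IsOpen X ↔ ∀ f ∈ X, ∃ n, ∀ g, SameApprox n f g → g ∈ X := by
  constructor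
  · rintro ⟨V, hV, rfl⟩ f hf
    obtain ⟨_, ⟨x, n, rfl⟩, hx, hxV⟩ :=
      (PiNat.isTopologicalBasis_cylinders fun _ => ℕ).isOpen_iff.1 hV f hf
    exact ⟨n, fun g hg => hxV fun i hi =>
      (hg i (hi.le.trans (f.le_firstOcc n))).symm.trans (hx i hi)⟩
  · refine fun hX => isOpen_iff_forall_mem_open.2 fun f hf => ?_
    obtain ⟨n, hn⟩ := hX f hf
    refine ⟨{g | SameApprox n f g}, hn, ?_, .refl n f⟩
    have hinter : {g | SameApprox n f g} =
        ⋂ x ∈ Iic (f.firstOcc n), (fun g : RigidSurjection l => g x) ⁻¹' {f x} := by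
      ext g
      simp only [mem_iInter, mem_Iic, mem_preimage, mem_singleton_iff]
      exact forall₂_congr fun _ _ => eq_comm
    rw [hinter]
    exact (finite_Iic _).isOpen_biInter fun x _ =>
      (isOpen_discrete _).preimage (continuous_apply x)

theorem completelyRamsey_of_isOpen [NeZero l] (hX : IsOpen X) : CompletelyRamsey X :=
  fun n a _ => exists_homogeneous_of_forall_accepts (fun _ hg =>
    (isOpen_iff.1 hX _ hg).imp fun _ hm _ hg' => hm _ (hg'.mul_right _)) n a

end RigidSurjection

end CompletelyRamsey

section Souslin

section SouslinOp

variable {X Y : Type*} {A : List ℕ → Set X}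

theorem souslinOp_subset_nil : souslinOp A ⊆ A [] :=
  iUnion_subset fun _ => iInter_subset_of_subset 0 Subset.rfl

theorem souslinOp_subset_iUnion_cons : souslinOp A ⊆ ⋃ j, souslinOp fun t => A (j :: t) := by
  refine iUnion_subset fun x f hf => mem_iUnion_of_mem (x 0) ?_
  refine mem_iUnion_of_mem (fun i => x (i + 1)) (mem_iInter_of_mem fun n => ?_)
  have := mem_iInter.1 hf (n + 1)
  rwa [List.range_succ_eq_map, List.map_cons, List.map_map] at this

theorem mem_souslinOp_of_forall_exists {f : X} {p : List ℕ → Prop} (hnil : p [])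
    (hsucc : ∀ s, p s → ∃ j, p (s ++ [j])) (hA : ∀ s, p s → f ∈ A s) : f ∈ souslinOp A := by
  choose j hj using hsucc
  let branch : ℕ → {s // p s} := Nat.rec ⟨[], hnil⟩ fun _ s => ⟨s ++ [j s.1 s.2], hj s.1 s.2⟩
  refine mem_iUnion_of_mem (fun n => j (branch n).1 (branch n).2) (mem_iInter_of_mem fun n => ?_)
  suffices h : (List.range n).map (fun n => j (branch n).1 (branch n).2) = (branch n).1 by
    rw [h]
    exact hA _ (branch n).2
  induction n with
  | zero => rfl
  | succ n ih => rw [List.range_succ, List.map_append, ih]; rfl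

theorem preimage_souslinOp (φ : Y → X) : φ ⁻¹' souslinOp A = souslinOp fun s => φ ⁻¹' A s := by
  simp only [souslinOp, preimage_iUnion, preimage_iInter]

theorem SouslinMeasurable.preimage {tX : TopologicalSpace X} {tY : TopologicalSpace Y}
    {φ : Y → X} (hφ : Continuous φ) {U : Set X} (hU : SouslinMeasurable tX U) :
    SouslinMeasurable tY (φ ⁻¹' U) := fun 𝒜 hopen hcompl hunion hsouslin =>
  hU {V | φ ⁻¹' V ∈ 𝒜} (fun _ hV => hopen _ (hφ.isOpen_preimage _ hV)) (fun _ => hcompl _)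
    (fun _ hV _ => hunion _ hV _) fun _ hA =>
      (congrArg (· ∈ 𝒜) (preimage_souslinOp φ)).mpr (hsouslin _ hA)

end SouslinOp

namespace RigidSurjection

variable {l k : ℕ} {X Y N : Set (RigidSurjection l)} {B : RigidSurjection l}

/-- `N` is Ramsey null: every `E` has a refinement, leaving the `n`-th approximation of `a`
available, all of whose extensions of that approximation lie outside `N`. -/
def RamseyNull (N : Set (RigidSurjection l)) : Prop :=
  ∀ n a E, ∃ h ∈ fixing (a.firstOcc n), Accepts Nᶜ n a (h * E)

theorem RamseyNull.exists_forall_mul_notMem {ι : Type*} [Countable ι]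
    {N : ι → Set (RigidSurjection l)} (hN : ∀ j, RamseyNull (N j)) (k : ℕ)
    (E : RigidSurjection l) : ∃ h ∈ fixing k, ∀ j g, g * (h * E) ∉ N j := by
  have := Encodable.ofCountable ι
  obtain ⟨h, hh, hacc⟩ := IsDenseOpen.exists_diagonal (D := fun j => Accepts (N j)ᶜ)
    (fun j => ⟨.congr, .mul, hN j⟩) k E
  refine ⟨h, hh, fun j g => ?_⟩
  have hdepth := g.le_firstOcc (max k (Encodable.encode j))
  exact (hacc j _ g ((le_max_left _ _).trans hdepth) ((le_max_right _ _).trans hdepth)).mul_mem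

/-- An envelope of `{g | g * B ∈ Y}`: the `f` none of whose approximations of depth at least `k`
can be refined so as to avoid `Y`. -/
def envelope (Y : Set (RigidSurjection l)) (B : RigidSurjection l) (k : ℕ) :
    Set (RigidSurjection l) :=
  {f | ∀ n, k ≤ f.firstOcc n → Rejects Yᶜ n f B}

theorem completelyRamsey_envelope [NeZero l] (Y : Set (RigidSurjection l))
    (B : RigidSurjection l) (k : ℕ) : CompletelyRamsey (envelope Y B k) := by
  rw [← compl_compl (envelope Y B k)]
  refine (completelyRamsey_of_isOpen (isOpen_iff.2 fun f hf => ?_)).compl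
  simp only [envelope, mem_compl_iff, mem_ofPred_eq, not_forall] at hf ⊢
  obtain ⟨n, hn, hrej⟩ := hf
  exact ⟨n, fun g hg => ⟨n, hg.firstOcc_eq ▸ hn, mt (.congr hg.symm) hrej⟩⟩

theorem mem_envelope_of_mul_mem
    (hB : ∀ n a, k ≤ a.firstOcc n → Accepts Yᶜ n a B ∨ Rejects Yᶜ n a B)
    {g : RigidSurjection l} (hg : g * B ∈ Y) : g ∈ envelope Y B k :=
  fun n hn => (hB n g hn).resolve_left fun hacc => hacc.mul_mem hg

theorem ramseyNull_of_subset_envelope (hN : CompletelyRamsey N) (hsub : N ⊆ envelope Y B k)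
    (hY : ∀ g ∈ N, g * B ∉ Y) : RamseyNull N := fun n a E => by
  obtain ⟨h, hh, hacc | hacc⟩ := hN n a E
  · let m := max n k
    have hm : k ≤ (a * (h * E)).firstOcc m := (le_max_right n k).trans (le_firstOcc _ m)
    exact absurd (fun g hg => hY _ (hacc g (hg.mono (le_max_left n k))))
      (hsub hacc.mul_mem m hm).of_mul.not_accepts
  · exact ⟨h, hh, hacc⟩

theorem CompletelyRamsey.of_preimage_mul_right
    (hX : ∀ k E, ∃ h ∈ fixing k, CompletelyRamsey ((· * (h * E)) ⁻¹' X)) : CompletelyRamsey X :=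
  fun n a E => by
    obtain ⟨h, hh, hX'⟩ := hX (a.firstOcc n) E
    obtain ⟨h', hh', hhom⟩ := hX' n a 1
    exact ⟨h' * h, mul_mem hh' hh, hhom⟩

theorem CompletelyRamsey.exists_preimage_souslinOp [NeZero l]
    {A : List ℕ → Set (RigidSurjection l)} (hA : ∀ s, CompletelyRamsey (A s)) (k : ℕ)
    (E : RigidSurjection l) :
    ∃ h ∈ fixing k, CompletelyRamsey ((· * (h * E)) ⁻¹' DualRamsey.souslinOp A) := by
  let Y (s : List ℕ) : Set (RigidSurjection l) := DualRamsey.souslinOp fun t => A (s ++ t)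
  obtain ⟨h, hh, hdec⟩ := IsDenseOpen.exists_diagonal
    (fun s => isDenseOpen_accepts_or_rejects (Y s)ᶜ) k E
  set B := h * E
  let d (s : List ℕ) : ℕ := max k (Encodable.encode s)
  let Z (s : List ℕ) : Set (RigidSurjection l) := envelope (Y s) B (d s) ∩ (· * B) ⁻¹' A s
  have hZ s : CompletelyRamsey (Z s) :=
    (completelyRamsey_envelope (Y s) B (d s)).inter ((hA s).preimage_mul_right B)
  have hYZ : ∀ s g, g * B ∈ Y s → g ∈ Z s := fun s g hg =>
    ⟨mem_envelope_of_mul_mem (fun n a hd => hdec s n a ((le_max_left _ _).trans hd)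
      ((le_max_right _ _).trans hd)) hg,
      List.append_nil s ▸ souslinOp_subset_nil (A := fun t => A (s ++ t)) hg⟩
  have hnull s : RamseyNull (Z s ∩ (⋃ j, Z (s ++ [j]))ᶜ) :=
    ramseyNull_of_subset_envelope ((hZ s).inter (iUnion fun j => hZ (s ++ [j])).compl)
      (inter_subset_left.trans inter_subset_left) fun g hg hgY => by
        obtain ⟨j, hj⟩ := mem_iUnion.1 (souslinOp_subset_iUnion_cons hgY)
        refine hg.2 (mem_iUnion_of_mem j (hYZ _ g ?_))
        simpa only [Y, List.append_assoc, List.singleton_append] using hj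
  obtain ⟨H, hH, havoid⟩ := RamseyNull.exists_forall_mul_notMem hnull k 1
  have hmem w : w * (H * B) ∈ DualRamsey.souslinOp A ↔ w * H ∈ Z [] :=
    ⟨hYZ [] (w * H), fun hw => mem_souslinOp_of_forall_exists (p := fun s => w * H ∈ Z s) hw
      (fun s hs => mem_iUnion.1 (not_not.1 fun hnot => havoid s w ⟨hs, hnot⟩)) fun _ hs => hs.2⟩
  refine ⟨H * h, mul_mem hH hh, ?_⟩
  rw [show (· * (H * h * E)) ⁻¹' DualRamsey.souslinOp A = (· * H) ⁻¹' Z [] from Set.ext hmem]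
  exact (hZ []).preimage_mul_right H

theorem CompletelyRamsey.souslinOp [NeZero l] {A : List ℕ → Set (RigidSurjection l)}
    (hA : ∀ s, CompletelyRamsey (A s)) : CompletelyRamsey (souslinOp A) :=
  of_preimage_mul_right (exists_preimage_souslinOp hA)

theorem completelyRamsey_of_souslinMeasurable [NeZero l]
    (hX : SouslinMeasurable inferInstance X) : CompletelyRamsey X :=
  hX {X | CompletelyRamsey X} (fun _ => completelyRamsey_of_isOpen)
    (fun _ => CompletelyRamsey.compl) (fun _ hX _ => hX.union) fun _ => CompletelyRamsey.souslinOp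

end RigidSurjection

end Souslin

section Coding

open scoped Topology

theorem exists_mem_minReps_rel (R : Setoid ℕ) (x : ℕ) : ∃ m ∈ minReps R, R m x := by
  classical
  have hx : ∃ m, R m x := ⟨x, R.refl x⟩
  exact ⟨Nat.find hx, fun y hy => Nat.find_min' hx (R.trans (R.symm hy) (Nat.find_spec hx)),
    Nat.find_spec hx⟩

theorem eq_of_mem_minReps {R : Setoid ℕ} {m n : ℕ} (hm : m ∈ minReps R) (hn : n ∈ minReps R)
    (h : R m n) : m = n :=
  le_antisymm (hm n h) (hn m (R.symm h))

theorem infinite_classes_iff {X : Type*} (e : ℕ ≃ X) (E : Setoid X) :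
    (classes E).Infinite ↔ (minReps (E.comap e)).Infinite := by
  suffices h : BijOn (fun n => {y | E (e n) y}) (minReps (E.comap e)) (classes E) from
    (not_congr h.finite_iff_finite).symm
  refine ⟨fun n _ => ⟨e n, rfl⟩, fun m hm n hn hmn => ?_, ?_⟩
  · exact eq_of_mem_minReps hm hn (hmn.ge (E.refl (e n)))
  · rintro _ ⟨x, rfl⟩
    obtain ⟨m, hm, hmx⟩ := exists_mem_minReps_rel (E.comap e) (e.symm x)
    replace hmx : E (e m) x := by simpa only [Setoid.comap_rel, e.apply_symm_apply] using hmx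
    exact ⟨m, hm, Set.ext fun y => ⟨E.trans (E.symm hmx), E.trans hmx⟩⟩

theorem exists_ker_eq (R : Setoid ℕ) (hR : (minReps R).Infinite) :
    ∃ f : ℕ → ℕ, Setoid.ker f = R ∧ (∀ n, f (pRep R n) = n) ∧ ∀ x, R (pRep R (f x)) x := by
  classical
  choose μ hμ hμR using exists_mem_minReps_rel R
  have hnth x : pRep R (Nat.count (· ∈ minReps R) (μ x)) = μ x := Nat.nth_count (hμ x)
  have hμ_eq {x y} (h : R x y) : μ x = μ y :=
    eq_of_mem_minReps (hμ x) (hμ y) (R.trans (hμR x) (R.trans h (R.symm (hμR y))))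
  refine ⟨fun x => Nat.count (· ∈ minReps R) (μ x), Setoid.ext fun x y => ⟨fun h => ?_, fun h =>
    congrArg _ (hμ_eq h)⟩, fun n => ?_, fun x => (hnth x).symm ▸ hμR x⟩
  · have hxy : μ x = μ y := by rw [← hnth x, ← hnth y, Setoid.ker_def.1 h]
    exact R.trans (R.symm (hμR x)) (hxy ▸ hμR y)
  · have hn : pRep R n ∈ minReps R := Nat.nth_mem_of_infinite hR n
    dsimp only
    rw [eq_of_mem_minReps (hμ _) hn (hμR _)]
    exact Nat.count_nth_of_infinite hR n

namespace RigidSurjection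

variable {l : ℕ}

theorem minReps_ker (f : RigidSurjection l) : minReps (Setoid.ker f) = range f.firstOcc := by
  ext x
  constructor
  · exact fun hx => ⟨f x, (f.firstOcc_apply_le x).antisymm (hx _ (f.apply_firstOcc _).symm)⟩
  · rintro ⟨n, rfl⟩ y hy
    exact firstOcc_le (hy.symm.trans (f.apply_firstOcc n))

theorem pRep_ker (f : RigidSurjection l) (k : ℕ) : pRep (Setoid.ker f) k = f.firstOcc k := by
  have hinf : (minReps (Setoid.ker f)).Infinite := by
    rw [minReps_ker]
    exact infinite_range_of_injective f.firstOcc_strictMono.injective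
  refine congrFun (((Nat.nth_strictMono hinf).range_inj f.firstOcc_strictMono).1 ?_) k
  exact (Nat.range_nth_of_infinite hinf).trans f.minReps_ker

end RigidSurjection

variable {l : ℕ} [NeZero l] {E : Setoid (ℕ × Fin l)}

local notation "ν" => Nat.divModEquiv l

theorem divModEquiv_mem_lexMinRepsL_iff {n : ℕ} :
    ν n ∈ lexMinRepsL E ↔ n ∈ minReps (E.comap ν) := by
  refine (ν).symm.forall_congr fun {b} => ?_
  simp only [Setoid.comap_rel, Equiv.apply_symm_apply, lexLE_iff, Equiv.symm_apply_apply]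

theorem pRepL_eq (hE : lexMinRepsL E = minRepsL E) (k : ℕ) :
    pRepL l (NeZero.pos l) E k = ν (pRep (E.comap ν) k) := by
  have hmem : (fun n => decodeL l (NeZero.pos l) n ∈ minRepsL E) = (· ∈ minReps (E.comap ν)) :=
    funext fun n => propext (hE ▸ divModEquiv_mem_lexMinRepsL_iff)
  rw [pRepL, hmem]
  rfl

theorem ordLE_divModEquiv_iff {x y : ℕ} :
    ordLE (ν x) (ν y) ↔ x % l < y % l ∨ x % l = y % l ∧ x ≤ y := by
  have hx := Nat.div_add_mod x l
  have hy := Nat.div_add_mod y l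
  simp only [ordLE, Nat.divModEquiv_apply, Fin.lt_def, Fin.ext_iff, Fin.val_ofNat]
  refine or_congr_right (and_congr_right fun h => ⟨fun hle => ?_, Nat.div_le_div_right⟩)
  rw [← hx, ← hy, h]
  gcongr

namespace RigidSurjection

/-- The equivalence relation on `ω·l` whose classes, once `ω·l` is enumerated in `⪯`-increasing
order, are the fibres of a rigid surjection. -/
def toSetoid (f : RigidSurjection l) : Setoid (ℕ × Fin l) := (Setoid.ker f).comap (ν).symm

theorem toSetoid_rel {f : RigidSurjection l} {a b : ℕ × Fin l} :
    f.toSetoid a b ↔ f ((ν).symm a) = f ((ν).symm b) := Iff.rfl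

theorem comap_toSetoid (f : RigidSurjection l) : f.toSetoid.comap ν = Setoid.ker f :=
  Setoid.ext fun x y => by
    simp only [Setoid.comap_rel, toSetoid_rel, Setoid.ker_def, Equiv.symm_apply_apply]

theorem lexMinRepsL_toSetoid (f : RigidSurjection l) :
    lexMinRepsL f.toSetoid = minRepsL f.toSetoid := by
  ext a
  obtain ⟨x, rfl⟩ := (ν).surjective a
  rw [divModEquiv_mem_lexMinRepsL_iff, comap_toSetoid, minReps_ker]
  constructor
  · rintro ⟨n, rfl⟩
    refine (ν).forall_congr_right.1 fun y hy => ordLE_divModEquiv_iff.2 ?_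
    have hn : f y = n := by
      simpa only [toSetoid_rel, Equiv.symm_apply_apply, apply_firstOcc] using hy.symm
    have hmod : f.firstOcc n % l ≤ y % l :=
      (f.firstOcc_mod n).trans_le (hn ▸ f.apply_mod_le y)
    exact hmod.lt_or_eq.imp_right fun h => ⟨h, firstOcc_le hn⟩
  · intro hx
    have hord := ordLE_divModEquiv_iff.1 (hx (ν (f.firstOcc (f x))) (by
      simp only [toSetoid_rel, Equiv.symm_apply_apply, apply_firstOcc]))
    rw [f.firstOcc_mod] at hord
    have hmod := f.apply_mod_le x
    exact ⟨f x, (f.firstOcc_apply_le x).antisymm (by omega)⟩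

theorem toSetoid_mem_EInfL (f : RigidSurjection l) : f.toSetoid ∈ EInfL l (NeZero.pos l) := by
  refine ⟨?_, fun k => ?_, f.lexMinRepsL_toSetoid⟩
  · rw [infinite_classes_iff ν, comap_toSetoid, minReps_ker]
    exact infinite_range_of_injective f.firstOcc_strictMono.injective
  · rw [pRepL_eq f.lexMinRepsL_toSetoid, comap_toSetoid, pRep_ker]
    exact Fin.ext (f.firstOcc_mod k)

/-- `toSetoid`, as a parametrization of `𝓔_∞(ω·l)`. -/
def toEInfL (f : RigidSurjection l) : EInfL l (NeZero.pos l) :=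
  ⟨f.toSetoid, f.toSetoid_mem_EInfL⟩

theorem toEInfL_surjective :
    Function.Surjective (toEInfL : RigidSurjection l → EInfL l (NeZero.pos l)) := by
  rintro ⟨E, hinf, hmod, hE⟩
  rw [infinite_classes_iff ν] at hinf
  obtain ⟨f, hf, hfirst, hrel⟩ := exists_ker_eq _ hinf
  set p := pRep (E.comap ν)
  have hmin n : p n ∈ minReps (E.comap ν) := Nat.nth_mem_of_infinite hinf n
  have hp n : p n % l = n % l := by
    simpa only [pRepL_eq hE, Nat.divModEquiv_apply, Fin.ext_iff, Fin.val_ofNat] using hmod n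
  let g : RigidSurjection l :=
    { toFun := f
      firstOcc := p
      firstOcc_strictMono := Nat.nth_strictMono hinf
      toFun_firstOcc := hfirst
      firstOcc_toFun_le := fun x => hmin (f x) x (hrel x)
      firstOcc_mod := hp
      toFun_mod_le := fun x => by
        have hmem : ν (p (f x)) ∈ minRepsL E := hE ▸ divModEquiv_mem_lexMinRepsL_iff.2 (hmin _)
        have := ordLE_divModEquiv_iff.1 (hmem (ν x) (hrel x))
        rw [hp] at this
        omega }
  refine ⟨g, Subtype.ext (Setoid.ext fun a b => ?_)⟩
  have hab := Setoid.ext_iff.1 hf ((ν).symm a) ((ν).symm b)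
  rwa [Setoid.comap_rel, Equiv.apply_symm_apply, Equiv.apply_symm_apply] at hab

theorem coarsens_toSetoid_iff {f g : RigidSurjection l} :
    Coarsens f.toSetoid g.toSetoid ↔ ∃ u, f = u * g := by
  constructor
  · refine fun h => exists_eq_mul fun x y hxy => ?_
    have hν : g x = g y → f x = f y := by
      simpa only [toSetoid_rel, Equiv.symm_apply_apply] using h (ν x) (ν y)
    exact hν hxy
  · rintro ⟨u, rfl⟩ a b hab
    exact congrArg u hab

theorem continuous_toEInfL :
    Continuous[inferInstance, graphTop _] (toEInfL : RigidSurjection l → _) := by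
  refine continuous_induced_rng.2 (continuous_pi fun q => ?_)
  have hpair : Continuous fun f : RigidSurjection l => (f ((ν).symm q.1), f ((ν).symm q.2)) :=
    (continuous_apply _).prodMk (continuous_apply _)
  exact (continuous_of_discreteTopology (f := fun p : ℕ × ℕ =>
    @decide (p.1 = p.2) (Classical.dec _))).comp hpair

end RigidSurjection

end Coding

/-- **Corollary 3.7 (dual Silver theorem for `ω·l`):** for every finite Souslin
measurable colouring of `𝓔_∞(ω·l)` (with the topology inherited from
`2^((ω·l)×(ω·l))`) and every `E ∈ 𝓔_∞(ω·l)`, there is `F ∈ 𝓔_∞(ω·l)` with `F ≤ E`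
such that the colouring is constant on `𝓔_∞(ω·l) ↾ F`. -/
theorem dualSilverOmegaL (l : ℕ) (hl : 0 < l)
    (m : ℕ) (c : ↥(EInfL l hl) → Fin m)
    (hc : ∀ i : Fin m, SouslinMeasurable (graphTop (EInfL l hl)) {E | c E = i})
    (E : ↥(EInfL l hl)) :
    ∃ F : ↥(EInfL l hl), Coarsens F.1 E.1 ∧
      ∀ F₁ F₂ : ↥(EInfL l hl), Coarsens F₁.1 F.1 → Coarsens F₂.1 F.1 → c F₁ = c F₂ := by
  have : NeZero l := ⟨hl.ne'⟩
  obtain ⟨e, rfl⟩ := RigidSurjection.toEInfL_surjective E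
  obtain ⟨h, hconst⟩ := RigidSurjection.exists_forall_mul_eq_of_completelyRamsey
    (c := c ∘ RigidSurjection.toEInfL) (fun i =>
      RigidSurjection.completelyRamsey_of_souslinMeasurable
        ((hc i).preimage RigidSurjection.continuous_toEInfL)) e
  refine ⟨(h * e).toEInfL, RigidSurjection.coarsens_toSetoid_iff.2 ⟨h, rfl⟩, ?_⟩
  intro F₁ F₂ hF₁ hF₂
  obtain ⟨f₁, rfl⟩ := RigidSurjection.toEInfL_surjective F₁
  obtain ⟨f₂, rfl⟩ := RigidSurjection.toEInfL_surjective F₂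
  obtain ⟨u₁, rfl⟩ := RigidSurjection.coarsens_toSetoid_iff.1 hF₁
  obtain ⟨u₂, rfl⟩ := RigidSurjection.coarsens_toSetoid_iff.1 hF₂
  exact hconst u₁ u₂

end DualRamsey
end

section
/- Let L = ⋃_{n<ω} L_n be an infinite alphabet given as the union of an increasing chain (L_n)_{n<ω} of finite subsets. For every finite colouring of W_L there exist a variable-free word w_0 ∈ W_L and an infinite sequence X = (x_n)_{n<ω} of left-variable words such that the translate w_0⌢[X]_L^* = {w_0⌢x_0[λ_0]⌢x_1[λ_1]⌢…⌢x_k[λ_k] : k < ω, λ_i ∈ L_i for each i ≤ k} is monochromatic. -/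
/-!
Left-variable words form a right ideal in the monoid of words over `L ∪ {v}`, and the substitutions
`x ↦ x[l]` are homomorphisms onto `W_L` fixing the variable-free words. In the compact semigroup of
ultrafilters on `W_L`, take `w` in a minimal left ideal. Some idempotent ultrafilter `u = p * w` is
concentrated on left-variable words, and its images `u[l] = p[l] * w` are idempotents of the same
minimal left ideal. There every `a` and every idempotent `b` satisfy `a * b = a`; hence
`w * u[l] = w` and `u[l] * u[l'] = u[l]`. As in the Galvin–Glazer proof of Hindman's theorem, `w`
selects a colour, and these identities make `u`-almost every `x` extend any finite set of suitable
words by `x[l]`, for finitely many letters `l`, to words that are again suitable and of that colour.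
-/

namespace DualRamsey

/-- Variable words over alphabet `L` are words over `Option L`, where `none` plays the
role of the variable `v`. `substW x lam` is `x[λ]`: replace every occurrence of the
variable by `lam`. -/
def substW {L : Type*} (x : List (Option L)) (lam : L) : List L :=
  x.map (fun o => o.getD lam)

/-- A left-variable word: a variable word whose first letter is the variable. -/
def IsLeftVar {L : Type*} (x : List (Option L)) : Prop := x.head? = some none

attribute [local instance] Ultrafilter.mul Ultrafilter.semigroup

section LeftIdeal

theorem exists_mem_of_ne_bot {R X : Type*} [SMul R X] {I : SubMulAction R X} (hI : I ≠ ⊥) :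
    ∃ q, q ∈ I := by
  contrapose! hI
  exact SetLike.coe_injective (Set.eq_empty_of_forall_notMem hI)

variable {S : Type*} [Semigroup S]

/-- The left ideal `S * q` of a semigroup `S`; it need not contain `q`. Left ideals of `S` are
encoded as `SubMulAction S S`, so that the minimal left ideals are the atoms. -/
def principalLeftIdeal (q : S) : SubMulAction S S where
  carrier := Set.range (· * q)
  smul_mem' := by
    rintro a _ ⟨b, rfl⟩
    exact ⟨a * b, mul_assoc a b q⟩

theorem mem_principalLeftIdeal {p q : S} : p ∈ principalLeftIdeal q ↔ ∃ r, r * q = p :=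
  Iff.rfl

theorem principalLeftIdeal_le {I : SubMulAction S S} {q : S} (hq : q ∈ I) :
    principalLeftIdeal q ≤ I := by
  rintro _ ⟨r, rfl⟩
  exact I.smul_mem r hq

theorem principalLeftIdeal_ne_bot (q : S) : principalLeftIdeal q ≠ ⊥ :=
  ne_of_mem_of_not_mem' (mem_principalLeftIdeal.mpr ⟨q, rfl⟩) (Set.notMem_empty _)

theorem mul_eq_left_of_mem_isAtom {I : SubMulAction S S} (hI : IsAtom I) {p q : S} (hp : p ∈ I)
    (hq : q ∈ I) (hqq : IsIdempotentElem q) : p * q = p := by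
  have hIq : principalLeftIdeal q = I :=
    (hI.le_iff.mp (principalLeftIdeal_le hq)).resolve_left (principalLeftIdeal_ne_bot q)
  obtain ⟨r, rfl⟩ := mem_principalLeftIdeal.mp (hIq ▸ hp)
  rw [mul_assoc, hqq.eq]

variable [TopologicalSpace S] [CompactSpace S] [T2Space S]

theorem exists_forall_mem_principalLeftIdeal_of_isChain (hmul : ∀ r : S, Continuous (· * r))
    {C : Set S} (hC : IsChain (fun p q ↦ principalLeftIdeal q ≤ principalLeftIdeal p) C)
    (hne : C.Nonempty) : ∃ q, ∀ p ∈ C, q ∈ principalLeftIdeal p := by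
  have : Std.Refl fun p q : S ↦ principalLeftIdeal q ≤ principalLeftIdeal p := ⟨fun _ ↦ le_rfl⟩
  have : Nonempty C := hne.to_subtype
  have hcompact (p : S) : IsCompact (principalLeftIdeal p : Set S) := isCompact_range (hmul p)
  obtain ⟨q, hq⟩ := IsCompact.nonempty_iInter_of_directed_nonempty_isCompact_isClosed
    (fun p : C ↦ (principalLeftIdeal (p : S) : Set S)) hC.directedOn.directed_val
    (fun p ↦ ⟨p * p, p, rfl⟩) (fun p ↦ hcompact p) (fun p ↦ (hcompact p).isClosed)
  exact ⟨q, fun p hp ↦ Set.mem_iInter.mp hq ⟨p, hp⟩⟩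

-- Zorn's lemma is applied to generators, since principal left ideals are automatically closed.
theorem isAtomic_leftIdeal (hmul : ∀ r : S, Continuous (· * r)) : IsAtomic (SubMulAction S S) where
  eq_bot_or_exists_atom_le I := by
    refine or_iff_not_imp_left.mpr fun hI ↦ ?_
    obtain ⟨q₀, hq₀⟩ := exists_mem_of_ne_bot hI
    have : Nonempty I := ⟨⟨q₀, hq₀⟩⟩
    let r (p q : I) : Prop := principalLeftIdeal (q : S) ≤ principalLeftIdeal (p : S)
    have hbdd (C : Set I) (hC : IsChain r C) (hne : C.Nonempty) : ∃ q, ∀ p ∈ C, r p q := by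
      obtain ⟨q, hq⟩ := exists_forall_mem_principalLeftIdeal_of_isChain hmul
        (hC.image_of_map_rel _ _ Subtype.val fun _ _ h ↦ h) (hne.image _)
      rw [Set.forall_mem_image] at hq
      obtain ⟨p, hp⟩ := hne
      exact ⟨⟨q, principalLeftIdeal_le p.2 (hq hp)⟩, fun p hp ↦ principalLeftIdeal_le (hq hp)⟩
    obtain ⟨⟨w, hwI⟩, hw⟩ :=
      exists_maximal_of_nonempty_chains_bounded hbdd fun hpq hqr ↦ hqr.trans hpq
    refine ⟨principalLeftIdeal w, isAtom_iff_le_of_ge.mpr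
      ⟨principalLeftIdeal_ne_bot w, fun J hJ hJw ↦ ?_⟩, principalLeftIdeal_le hwI⟩
    obtain ⟨b, hb⟩ := exists_mem_of_ne_bot hJ
    have hbw : principalLeftIdeal b ≤ principalLeftIdeal w := principalLeftIdeal_le (hJw hb)
    have hbI : b ∈ I := principalLeftIdeal_le hwI (hJw hb)
    exact (hw ⟨b, hbI⟩ hbw).trans (principalLeftIdeal_le hb)

end LeftIdeal

section Ultrafilter

variable {ι M N : Type*}

theorem ultrafilter_map_mul [Mul M] [Mul N] (f : N →ₙ* M) (U V : Ultrafilter N) :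
    (U * V).map f = U.map f * V.map f :=
  Ultrafilter.coe_injective <| Filter.ext' fun p ↦ by
    simp only [Ultrafilter.coe_map, Filter.eventually_map, Ultrafilter.eventually_mul, map_mul]

theorem exists_isIdempotentElem_mul_ultrafilter [Semigroup N] {V : Set N} (hne : V.Nonempty)
    (hV : ∀ x ∈ V, ∀ y, x * y ∈ V) (q : Ultrafilter N) :
    ∃ p : Ultrafilter N, V ∈ p * q ∧ IsIdempotentElem (p * q) := by
  have hmul {p r : Ultrafilter N} (hp : V ∈ p) : V ∈ p * r :=
    (Ultrafilter.eventually_mul p r (· ∈ V)).mpr <|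
      Filter.Eventually.mono hp fun x hx ↦ Filter.Eventually.of_forall (hV x hx)
  obtain ⟨x, hx⟩ := hne
  have hcompact : IsCompact {p : Ultrafilter N | V ∈ p} := (ultrafilter_isClosed_basic V).isCompact
  obtain ⟨_, ⟨p, hp, rfl⟩, hpq⟩ := exists_idempotent_in_compact_subsemigroup
    Ultrafilter.continuous_mul_left ((· * q) '' {p | V ∈ p}) ⟨_, pure x, hx, rfl⟩
    (hcompact.image (Ultrafilter.continuous_mul_left q)) <| by
      rintro _ ⟨a, ha, rfl⟩ _ ⟨b, -, rfl⟩
      exact ⟨a * (q * b), hmul ha, by simp only [mul_assoc]⟩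
  exact ⟨p, hmul hp, hpq⟩

theorem exists_ultrafilter_mul_map_eq [Semigroup M] [Nonempty M] [Semigroup N] (f : ι → N →ₙ* M)
    (g : M →ₙ* N) (hfg : ∀ i, Function.LeftInverse (f i) g) {V : Set N} (hne : V.Nonempty)
    (hV : ∀ x ∈ V, ∀ y, x * y ∈ V) :
    ∃ (w : Ultrafilter M) (u : Ultrafilter N), V ∈ u ∧ (∀ i, w * u.map (f i) = w) ∧
      ∀ i j, u.map (f i) * u.map (f j) = u.map (f i) := by
  have : IsAtomic (SubMulAction (Ultrafilter M) (Ultrafilter M)) :=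
    isAtomic_leftIdeal Ultrafilter.continuous_mul_left
  obtain ⟨x⟩ := ‹Nonempty M›
  obtain ⟨I, hI, -⟩ := (eq_bot_or_exists_atom_le _).resolve_left
    (principalLeftIdeal_ne_bot (pure x : Ultrafilter M))
  obtain ⟨w, hw⟩ := exists_mem_of_ne_bot hI.ne_bot
  obtain ⟨p, hVp, hidem⟩ := exists_isIdempotentElem_mul_ultrafilter hne hV (w.map g)
  have hmem (i : ι) : (p * w.map g).map (f i) ∈ I := by
    rw [ultrafilter_map_mul, Ultrafilter.map_map, (hfg i).comp_eq_id, Ultrafilter.map_id]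
    exact I.smul_mem _ hw
  have hidem_map (i : ι) : IsIdempotentElem ((p * w.map g).map (f i)) := by
    rw [IsIdempotentElem, ← ultrafilter_map_mul, hidem.eq]
  exact ⟨w, p * w.map g, hVp, fun i ↦ mul_eq_left_of_mem_isAtom hI hw (hmem i) (hidem_map i),
    fun i j ↦ mul_eq_left_of_mem_isAtom hI (hmem i) (hmem j) (hidem_map j)⟩

/-- `a` satisfies `P`, and for each `i ∈ A` so does `a * b` for `e i`-almost every `b`. It is the
property maintained while building the infinite sequence, where `e i` is the image under `x ↦ x[i]`
of an ultrafilter on variable words. -/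
def IsExtendable [Mul M] (P : M → Prop) (e : ι → Ultrafilter M) (A : Set ι) (a : M) : Prop :=
  P a ∧ ∀ i ∈ A, ∀ᶠ b in e i, P (a * b)

theorem eventually_isExtendable [Mul M] {P : M → Prop} {e : ι → Ultrafilter M} {w : Ultrafilter M}
    (hw : ∀ i, w * e i = w) (hP : ∀ᶠ a in w, P a) {A : Set ι} (hA : A.Finite) :
    ∀ᶠ a in w, IsExtendable P e A a := by
  refine hP.and <| (Filter.eventually_all_finite hA).mpr fun i _ ↦ ?_
  rwa [← hw i, Ultrafilter.eventually_mul] at hP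

theorem IsExtendable.eventually_mul [Semigroup M] {P : M → Prop} {e : ι → Ultrafilter M}
    {i : ι} (he : ∀ j, e i * e j = e i) {A B : Set ι} (hB : B.Finite) {a : M}
    (ha : IsExtendable P e A a) (hi : i ∈ A) :
    ∀ᶠ b in e i, IsExtendable P e B (a * b) := by
  simpa only [IsExtendable, mul_assoc] using eventually_isExtendable he (ha.2 i hi) hB

end Ultrafilter

section InfiniteProduct

variable {ι M N : Type*} [Monoid M]

theorem exists_seq_forall_mul_prod (f : ι → N → M) {V : Set N} {A : ℕ → Set ι}
    (hA : ∀ n, (A n).Finite) {Q : ℕ → M → Prop} {a₀ : M} (hQ₀ : Q 0 a₀)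
    (hQ : ∀ n (E : Set M), E.Finite → (∀ a ∈ E, Q n a) →
      ∃ x ∈ V, ∀ a ∈ E, ∀ i ∈ A n, Q (n + 1) (a * f i x)) :
    ∃ x : ℕ → N, (∀ n, x n ∈ V) ∧ ∀ n (lam : Fin n → ι), (∀ j : Fin n, lam j ∈ A j) →
      Q n (a₀ * (List.ofFn fun j : Fin n ↦ f (lam j) (x j)).prod) := by
  choose x hxV hx using fun n (E : {E : Set M // E.Finite ∧ ∀ a ∈ E, Q n a}) ↦
    hQ n E E.2.1 E.2.2
  -- `E n` is the set of partial products of length `n`, through which `x n` depends on the past.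
  let E (n : ℕ) : {E : Set M // E.Finite ∧ ∀ a ∈ E, Q n a} := n.rec
    ⟨{a₀}, Set.finite_singleton a₀, by rintro _ rfl; exact hQ₀⟩
    fun n E ↦ ⟨Set.image2 (fun a i ↦ a * f i (x n E)) E (A n), E.2.1.image2 _ (hA n),
      Set.forall_mem_image2.mpr (hx n E)⟩
  have hprod (n : ℕ) (lam : Fin n → ι) (hlam : ∀ j : Fin n, lam j ∈ A j) :
      a₀ * (List.ofFn fun j : Fin n ↦ f (lam j) (x j (E j))).prod ∈ (E n).1 := by
    induction n with
    | zero => simp [E]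
    | succ n ih =>
      rw [List.ofFn_succ', List.concat_eq_append, List.prod_append, List.prod_singleton,
        ← mul_assoc]
      exact Set.mem_image2_of_mem (ih _ fun j ↦ hlam j.castSucc) (hlam (Fin.last n))
  exact ⟨fun n ↦ x n (E n), fun n ↦ hxV n (E n), fun n lam hlam ↦ (E n).2.2 _ (hprod n lam hlam)⟩

theorem exists_seq_forall_mul_prod_of_ultrafilter (f : ι → N → M) {V : Set N} {A : ℕ → Set ι}
    (hA : ∀ n, (A n).Finite) {w : Ultrafilter M} {u : Ultrafilter N} (hV : V ∈ u)
    (hw : ∀ i, w * u.map (f i) = w) (hu : ∀ i j, u.map (f i) * u.map (f j) = u.map (f i))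
    {P : M → Prop} (hP : ∀ᶠ a in w, P a) :
    ∃ (a₀ : M) (x : ℕ → N), (∀ n, x n ∈ V) ∧ ∀ n (lam : Fin n → ι), (∀ j : Fin n, lam j ∈ A j) →
      P (a₀ * (List.ofFn fun j : Fin n ↦ f (lam j) (x j)).prod) := by
  let Q (n : ℕ) : M → Prop := IsExtendable P (fun i ↦ u.map (f i)) (A n)
  obtain ⟨a₀, ha₀⟩ := (eventually_isExtendable hw hP (hA 0)).exists
  have hQ (n : ℕ) (E : Set M) (hE : E.Finite) (hEQ : ∀ a ∈ E, Q n a) :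
      ∃ x ∈ V, ∀ a ∈ E, ∀ i ∈ A n, Q (n + 1) (a * f i x) := by
    have hext : ∀ᶠ x in u, ∀ a ∈ E, ∀ i ∈ A n, Q (n + 1) (a * f i x) :=
      (Filter.eventually_all_finite hE).mpr fun a ha ↦
        (Filter.eventually_all_finite (hA n)).mpr fun i hi ↦
          (hEQ a ha).eventually_mul (hu i) (hA (n + 1)) hi
    exact (Filter.Eventually.and hV hext).exists
  obtain ⟨x, hxV, hx⟩ := exists_seq_forall_mul_prod f hA ha₀ hQ
  exact ⟨a₀, x, hxV, fun n lam hlam ↦ (hx n lam hlam).1⟩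

end InfiniteProduct

section Words

variable {L : Type*}

theorem IsLeftVar.append {x : List (Option L)} (hx : IsLeftVar x) (y : List (Option L)) :
    IsLeftVar (x ++ y) := by
  rw [IsLeftVar] at hx ⊢
  rw [List.head?_append, hx, Option.some_or]

/-- The substitution `x ↦ x[l]` as a homomorphism from words with variables to words. -/
def substHom (l : L) : FreeMonoid (Option L) →* FreeMonoid L :=
  FreeMonoid.map fun o ↦ o.getD l

theorem leftInverse_substHom_map_some (l : L) :
    Function.LeftInverse (substHom l) (FreeMonoid.map some) := fun x ↦
  (List.map_map (l := x.toList)).trans (List.map_id _)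

theorem toList_mul_prod_substHom (a : FreeMonoid L) (x : ℕ → FreeMonoid (Option L)) {n : ℕ}
    (lam : Fin n → L) :
    (a * (List.ofFn fun j : Fin n ↦ substHom (lam j) (x j)).prod).toList =
      a.toList ++ (List.ofFn fun j : Fin n ↦ substW (x j).toList (lam j)).flatten := by
  rw [FreeMonoid.toList_mul, FreeMonoid.toList_prod, List.map_ofFn]
  rfl

theorem leftVariableHalesJewettInfinite_general {κ : Type*} [Finite κ] (Ln : ℕ → Set L)
    (hfin : ∀ n, (Ln n).Finite) (c : List L → κ) :
    ∃ (w₀ : List L) (X : ℕ → List (Option L)) (i : κ),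
      (∀ n, IsLeftVar (X n)) ∧
      ∀ (k : ℕ) (lam : Fin (k + 1) → L), (∀ j : Fin (k + 1), lam j ∈ Ln j) →
        c (w₀ ++ (List.ofFn fun j : Fin (k + 1) => substW (X j) (lam j)).flatten) = i := by
  obtain ⟨w, u, hVu, hw, hu⟩ := exists_ultrafilter_mul_map_eq
    (fun l : L ↦ (substHom l).toMulHom) (FreeMonoid.map some).toMulHom
    leftInverse_substHom_map_some (V := {x | IsLeftVar x.toList})
    ⟨FreeMonoid.of none, rfl⟩ fun _ hx y ↦ IsLeftVar.append hx y.toList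
  obtain ⟨i, hi⟩ : ∃ i, ∀ᶠ a : FreeMonoid L in w, c a.toList = i :=
    Ultrafilter.eventually_exists_iff.mp <| .of_forall fun _ ↦ ⟨_, rfl⟩
  obtain ⟨a₀, x, hxV, hx⟩ := exists_seq_forall_mul_prod_of_ultrafilter _ hfin hVu hw hu hi
  refine ⟨a₀.toList, fun n ↦ (x n).toList, i, hxV, fun k lam hlam ↦ ?_⟩
  rw [← toList_mul_prod_substHom]
  exact hx (k + 1) lam hlam

end Words

/-- **Left-variable Hales–Jewett theorem for infinite alphabets.**
Let `L = ⋃ₙ Lₙ` be an infinite alphabet given as the union of an increasing chain of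
finite subsets. For every finite colouring of `W_L` there are a variable-free word `w₀`
and an infinite sequence `X = (xₙ)` of left-variable words such that the translate
`w₀⌢[X]_L^* = {w₀⌢x₀[λ₀]⌢x₁[λ₁]⌢…⌢x_k[λ_k] : k < ω, λᵢ ∈ Lᵢ for i ≤ k}`
is monochromatic. -/
theorem leftVariableHalesJewettInfinite (L : Type) [Infinite L]
    (Ln : ℕ → Set L) (hmono : Monotone Ln) (hfin : ∀ n, (Ln n).Finite)
    (hcov : ⋃ n, Ln n = Set.univ)
    (m : ℕ) (c : List L → Fin m) :
    ∃ (w₀ : List L) (X : ℕ → List (Option L)) (i : Fin m),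
      (∀ n, IsLeftVar (X n)) ∧
      ∀ (k : ℕ) (lam : Fin (k + 1) → L), (∀ j : Fin (k + 1), lam j ∈ Ln j) →
        c (w₀ ++ (List.ofFn fun j : Fin (k + 1) => substW (X j) (lam j)).flatten) = i :=
  leftVariableHalesJewettInfinite_general Ln hfin c

end DualRamsey
end
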